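/- arXiv:2305.09355 — 11 statements merged into one kernel-verified Lean document; each statement's English description precedes it below -/
import Mathlib

section
/- Let F be a field, let ℙ be the prime field of F, and let G and H be finite groups. If the group algebras FG and FH are isomorphic as F-algebras, then there exists a finite field extension F₀ of ℙ such that F₀G and F₀H are isomorphic as F₀-algebras. -/
/-!
An isomorphism `e : F[M] ≃ F[N]` and its inverse are determined by their values on finitely many
generators of `M` and `N`, and these values have finitely many coefficients. Hence `e` is already
defined over the subalgebra `A` of `F` generated by those coefficients. By Zariski's lemma, the
residue field `K` of `A` at any maximal ideal is finite over the base, and extending scalars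
along `A → K` gives `K[M] ≃ K[N]`.
-/

namespace MonoidAlgebraDescent

open MonoidAlgebra TensorProduct

universe w

theorem adjoin_image_of_eq_top {R M : Type*} [CommSemiring R] [Monoid M] {S : Set M}
    (hS : Submonoid.closure S = ⊤) : Algebra.adjoin R (of R M '' S) = ⊤ := by
  rw [Set.image_eq_range, Algebra.adjoin_range_eq_range_freeAlgebra_lift, AlgHom.range_eq_top]
  exact freeAlgebra_lift_of_surjective_of_closure hS

section Descent

variable {A F M N : Type*} [CommSemiring A] [Semiring F] [Algebra A F] [Monoid M] [Monoid N]

variable (A F M) in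
/-- The copy of `A[M]` inside `F[M]`, consisting of the elements all of whose coefficients come
from `A`. An isomorphism `F[M] ≃ F[N]` matching up these copies descends to `A`. -/
noncomputable def coeffSubalgebra : Subalgebra A F[M] :=
  (mapAlgHom M (Algebra.ofId A F)).range

theorem mem_coeffSubalgebra_iff {x : F[M]} :
    x ∈ coeffSubalgebra A F M ↔ ∀ m, x.coeff m ∈ Set.range (algebraMap A F) :=
  Set.ext_iff.mp (range_map (M := M) (algebraMap A F : A →+ F)) x

theorem coeffSubalgebra_eq_adjoin {S : Set M} (hS : Submonoid.closure S = ⊤) :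
    coeffSubalgebra A F M = Algebra.adjoin A (of F M '' S) := by
  rw [coeffSubalgebra, ← Algebra.map_top, ← adjoin_image_of_eq_top hS, AlgHom.map_adjoin,
    Set.image_image]
  simp only [of_apply, mapAlgHom_single, map_one]

theorem map_coeffSubalgebra_le (φ : F[M] →ₐ[A] F[N]) {S : Set M}
    (hS : Submonoid.closure S = ⊤) (hφ : ∀ s ∈ S, φ (of F M s) ∈ coeffSubalgebra A F N) :
    (coeffSubalgebra A F M).map φ ≤ coeffSubalgebra A F N := by
  rw [coeffSubalgebra_eq_adjoin hS, AlgHom.map_adjoin, Set.image_image]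
  exact Algebra.adjoin_le (Set.image_subset_iff.mpr hφ)

theorem map_coeffSubalgebra_eq (e : F[M] ≃ₐ[A] F[N]) {S : Set M} {T : Set N}
    (hS : Submonoid.closure S = ⊤) (hT : Submonoid.closure T = ⊤)
    (he : ∀ s ∈ S, e (of F M s) ∈ coeffSubalgebra A F N)
    (he_symm : ∀ t ∈ T, e.symm (of F N t) ∈ coeffSubalgebra A F M) :
    (coeffSubalgebra A F M).map (e : F[M] →ₐ[A] F[N]) = coeffSubalgebra A F N := by
  refine le_antisymm (map_coeffSubalgebra_le (e : F[M] →ₐ[A] F[N]) hS he) fun y hy ↦ ?_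
  have symm_mem : e.symm y ∈ coeffSubalgebra A F M :=
    map_coeffSubalgebra_le (e.symm : F[N] →ₐ[A] F[M]) hT he_symm ⟨y, hy, rfl⟩
  exact ⟨e.symm y, symm_mem, e.apply_symm_apply y⟩

variable (A F M) in
/-- The isomorphism of `A[M]` with its copy inside `F[M]`, for `A` embedded in `F`. -/
noncomputable def equivCoeffSubalgebra [FaithfulSMul A F] : A[M] ≃ₐ[A] coeffSubalgebra A F M :=
  AlgEquiv.ofInjective (mapAlgHom M (Algebra.ofId A F))
    (map_injective _ (FaithfulSMul.algebraMap_injective A F))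

/-- The isomorphism `A[M] ≃ A[N]` obtained by restricting an isomorphism `F[M] ≃ F[N]` that
matches up the copies of `A[M]` and `A[N]`. -/
noncomputable def descendScalars [FaithfulSMul A F] (e : F[M] ≃ₐ[A] F[N])
    (he : (coeffSubalgebra A F M).map (e : F[M] →ₐ[A] F[N]) = coeffSubalgebra A F N) :
    A[M] ≃ₐ[A] A[N] :=
  (equivCoeffSubalgebra A F M).trans <| (e.subalgebraMap _).trans <|
    (Subalgebra.equivOfEq _ _ he).trans (equivCoeffSubalgebra A F N).symm

end Descent

section BaseChange

variable {A M N : Type*} [CommSemiring A] [Monoid M] [Monoid N]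
  (K : Type*) [CommSemiring K] [Algebra A K]

variable (A M) in
/-- The identification of the base change of `A[M]` to an `A`-algebra `K` with `K[M]`. -/
noncomputable def baseChangeEquiv : K ⊗[A] A[M] ≃ₐ[K] K[M] :=
  AlgEquiv.ofAlgHom
    (Algebra.TensorProduct.lift (Algebra.ofId K K[M]) (mapAlgHom M (Algebra.ofId A K))
      fun _ _ ↦ by rw [Algebra.ofId_apply]; exact Algebra.commute_algebraMap_left _ _)
    (lift K (K ⊗[A] A[M]) M ((Algebra.TensorProduct.includeRight :
      A[M] →ₐ[A] K ⊗[A] A[M]).toMonoidHom.comp (of A M)))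
    (by ext; simp)
    (by ext; simp)

/-- The base change of an isomorphism of monoid algebras over `A` to an `A`-algebra `K`. -/
noncomputable def extendScalars (e : A[M] ≃ₐ[A] A[N]) : K[M] ≃ₐ[K] K[N] :=
  (baseChangeEquiv A M K).symm.trans <|
    (Algebra.TensorProduct.congr .refl e).trans (baseChangeEquiv A N K)

end BaseChange

theorem exists_fg_subalgebra_forall_coeff_mem (k : Type*) {F M : Type*} [CommSemiring k]
    [Semiring F] [Algebra k F] {X : Set F[M]} (hX : X.Finite) :
    ∃ A : Subalgebra k F, A.FG ∧ ∀ x ∈ X, ∀ m, x.coeff m ∈ A := by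
  let c : Set F := ⋃ x ∈ X, x.coeff '' x.coeff.support
  have hc : c.Finite := hX.biUnion fun x _ ↦ x.coeff.support.finite_toSet.image _
  refine ⟨Algebra.adjoin k c, Subalgebra.fg_def.mpr ⟨c, hc, rfl⟩, fun x hx m ↦ ?_⟩
  by_cases hm : x.coeff m = 0
  · exact hm ▸ zero_mem _
  · exact Algebra.subset_adjoin (Set.mem_biUnion hx ⟨m, Finsupp.mem_support_iff.mpr hm, rfl⟩)

theorem exists_fg_subalgebra_nonempty_algEquiv (k : Type*) {F M N : Type*} [CommSemiring k]
    [CommSemiring F] [Algebra k F] [Monoid M] [Monoid N] [Monoid.FG M] [Monoid.FG N]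
    (e : F[M] ≃ₐ[F] F[N]) :
    ∃ A : Subalgebra k F, A.FG ∧ Nonempty (A[M] ≃ₐ[A] A[N]) := by
  obtain ⟨S, hS, S_finite⟩ := Monoid.fg_iff.mp ‹Monoid.FG M›
  obtain ⟨T, hT, T_finite⟩ := Monoid.fg_iff.mp ‹Monoid.FG N›
  obtain ⟨B, B_fg, hB⟩ :=
    exists_fg_subalgebra_forall_coeff_mem k (S_finite.image (e ∘ of F M))
  obtain ⟨C, C_fg, hC⟩ :=
    exists_fg_subalgebra_forall_coeff_mem k (T_finite.image (e.symm ∘ of F N))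
  have e_mem : ∀ s ∈ S, e (of F M s) ∈ coeffSubalgebra ↥(B ⊔ C) F N := fun s hs ↦
    mem_coeffSubalgebra_iff.mpr fun n ↦
      ⟨⟨_, (le_sup_left : B ≤ B ⊔ C) (hB _ ⟨s, hs, rfl⟩ n)⟩, rfl⟩
  have e_symm_mem : ∀ t ∈ T, e.symm (of F N t) ∈ coeffSubalgebra ↥(B ⊔ C) F M := fun t ht ↦
    mem_coeffSubalgebra_iff.mpr fun m ↦
      ⟨⟨_, (le_sup_right : C ≤ B ⊔ C) (hC _ ⟨t, ht, rfl⟩ m)⟩, rfl⟩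
  exact ⟨B ⊔ C, B_fg.sup C_fg, ⟨descendScalars (e.restrictScalars ↥(B ⊔ C))
    (map_coeffSubalgebra_eq _ hS hT e_mem e_symm_mem)⟩⟩

theorem exists_algHom_field_moduleFinite (k A : Type*) [CommRing k] [IsJacobsonRing k]
    [Small.{w} k] [CommRing A] [Nontrivial A] [Algebra k A] [Algebra.FiniteType k A] :
    ∃ (K : Type w) (_ : Field K) (_ : Algebra k K), Module.Finite k K ∧ Nonempty (A →ₐ[k] K) := by
  obtain ⟨m, hm⟩ := Ideal.exists_maximal A
  let _ : Field (A ⧸ m) := Ideal.Quotient.field m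
  have : Module.Finite k (A ⧸ m) := finite_of_finite_type_of_isJacobsonRing k (A ⧸ m)
  have : Small.{w} (A ⧸ m) := Module.Finite.small k (A ⧸ m)
  exact ⟨Shrink.{w} (A ⧸ m), inferInstance, inferInstance, inferInstance,
    ⟨(Shrink.algEquiv k (A ⧸ m)).symm.toAlgHom.comp (Ideal.Quotient.mkₐ k m)⟩⟩

theorem countable_bot_subfield (F : Type*) [DivisionRing F] : Countable (⊥ : Subfield F) := by
  rw [← Subfield.closure_empty, ← Cardinal.mk_le_aleph0_iff]
  simpa using Subfield.cardinalMk_closure_le_max (∅ : Set F)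

end MonoidAlgebraDescent

open MonoidAlgebraDescent in
theorem isomorphism_problem_reduces_to_finite_extensions_of_prime_field_general.{w}
    (k : Type*) [CommRing k] [IsJacobsonRing k] [Small.{w} k]
    (F : Type*) [CommRing F] [Nontrivial F] [Algebra k F]
    (M : Type*) (N : Type*) [Monoid M] [Monoid N] [Monoid.FG M] [Monoid.FG N]
    (h : Nonempty (MonoidAlgebra F M ≃ₐ[F] MonoidAlgebra F N)) :
    ∃ (K : Type w) (_ : Field K) (_ : Algebra k K),
      Module.Finite k K ∧ Nonempty (MonoidAlgebra K M ≃ₐ[K] MonoidAlgebra K N) := by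
  obtain ⟨e⟩ := h
  obtain ⟨A, A_fg, ⟨eA⟩⟩ := exists_fg_subalgebra_nonempty_algEquiv k e
  have : Algebra.FiniteType k A := A.fg_iff_finiteType.mp A_fg
  obtain ⟨K, _, _, K_finite, ⟨g⟩⟩ := exists_algHom_field_moduleFinite.{w} k A
  let _ : Algebra A K := g.toRingHom.toAlgebra
  exact ⟨K, inferInstance, inferInstance, K_finite, ⟨extendScalars K eA⟩⟩

/-- **Main Theorem.** Let `F` be a field with prime field `ℙ` (the subfield `⊥ : Subfield F`),
and let `G` and `H` be finite groups. If the group algebras `FG` and `FH` are isomorphic as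
`F`-algebras, then there is a finite field extension `F₀` of `ℙ` such that `F₀G ≅ F₀H` as
`F₀`-algebras. -/
theorem isomorphism_problem_reduces_to_finite_extensions_of_prime_field
    (F : Type*) [Field F] (G H : Type*) [Group G] [Group H] [Finite G] [Finite H]
    (h : Nonempty (MonoidAlgebra F G ≃ₐ[F] MonoidAlgebra F H)) :
    ∃ (F₀ : Type) (_ : Field F₀) (_ : Algebra (⊥ : Subfield F) F₀),
      FiniteDimensional (⊥ : Subfield F) F₀ ∧
      Nonempty (MonoidAlgebra F₀ G ≃ₐ[F₀] MonoidAlgebra F₀ H) := by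
  have := MonoidAlgebraDescent.countable_bot_subfield F
  exact isomorphism_problem_reduces_to_finite_extensions_of_prime_field_general.{0}
    (⊥ : Subfield F) F G H h
end

section
/- Let F be a field of characteristic 0 and let G and H be finite groups. If the group algebras FG and FH are isomorphic as F-algebras, then there exists a field F₀ of characteristic 0 that is finite-dimensional over ℚ (a number field) such that F₀G and F₀H are isomorphic as F₀-algebras. -/
/-!
An isomorphism `R ⊗ A ≃ R ⊗ B` between base changes of finitely generated `k`-algebras and its
inverse are determined by the images of finitely many generators, and these involve only finitely
many elements of `R`. Hence the isomorphism is already defined over the finitely generated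
subalgebra `S` of `R` which these elements generate. Base change along `S → S / m` for a maximal
ideal `m` moves it to a field, which is finite over `k` by Zariski's lemma.
-/

open scoped TensorProduct

section Coefficients

variable {k R A B : Type*} [CommSemiring k] [CommSemiring R] [Algebra k R]
  [Semiring A] [Algebra k A] [Semiring B] [Algebra k B]

variable (A) in
/-- The elements of `R ⊗[k] A` with coefficients in a subalgebra `S` of `R`: the image of
`S ⊗[k] A`, as an `S`-algebra. -/
def withCoeffsIn (S : Subalgebra k R) : Subalgebra S (R ⊗[k] A) :=
  (Algebra.TensorProduct.map (Algebra.ofId S R) (AlgHom.id k A)).range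

theorem tmul_mem_withCoeffsIn {S : Subalgebra k R} {r : R} (hr : r ∈ S) (a : A) :
    r ⊗ₜ[k] a ∈ withCoeffsIn A S :=
  ⟨(⟨r, hr⟩ : S) ⊗ₜ[k] a, rfl⟩

variable (A) in
/-- For `A` flat, `S ⊗[k] A` is identified with the elements of `R ⊗[k] A` with coefficients
in `S`. -/
noncomputable def tensorEquivWithCoeffsIn [Module.Flat k A] (S : Subalgebra k R) :
    S ⊗[k] A ≃ₐ[S] withCoeffsIn A S :=
  AlgEquiv.ofInjective _ <|
    Module.Flat.rTensor_preserves_injective_linearMap S.val.toLinearMap Subtype.val_injective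

theorem exists_finite_forall_mem_withCoeffsIn (x : R ⊗[k] A) :
    ∃ t : Set R, t.Finite ∧ ∀ S : Subalgebra k R, t ⊆ S → x ∈ withCoeffsIn A S := by
  induction x with
  | zero => exact ⟨∅, Set.finite_empty, fun S _ => zero_mem _⟩
  | tmul r a =>
    exact ⟨{r}, Set.finite_singleton r, fun S hS => tmul_mem_withCoeffsIn (hS rfl) a⟩
  | add x y hx hy =>
    obtain ⟨t, ht, hx⟩ := hx
    obtain ⟨u, hu, hy⟩ := hy
    exact ⟨t ∪ u, ht.union hu, fun S hS =>
      add_mem (hx S (Set.subset_union_left.trans hS)) (hy S (Set.subset_union_right.trans hS))⟩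

theorem map_withCoeffsIn_le {S : Subalgebra k R} {s : Set A} (hs : Algebra.adjoin k s = ⊤)
    (f : R ⊗[k] A →ₐ[R] R ⊗[k] B) (hf : ∀ a ∈ s, f (1 ⊗ₜ a) ∈ withCoeffsIn B S) :
    (withCoeffsIn A S).map (f.restrictScalars S) ≤ withCoeffsIn B S := by
  have one_tmul_mem : ∀ a, f (1 ⊗ₜ a) ∈ withCoeffsIn B S := by
    let φ : A →ₐ[k] R ⊗[k] B :=
      (f.restrictScalars k).comp Algebra.TensorProduct.includeRight
    have : Algebra.adjoin k s ≤ ((withCoeffsIn B S).restrictScalars k).comap φ :=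
      Algebra.adjoin_le hf
    exact fun a => this (hs ▸ Algebra.mem_top)
  rintro _ ⟨_, ⟨x, rfl⟩, rfl⟩
  induction x with
  | zero => simp
  | tmul c a =>
    have : f ((c : R) ⊗ₜ a) = c • f (1 ⊗ₜ a) := by
      rw [Subalgebra.smul_def, ← map_smul, TensorProduct.smul_tmul', smul_eq_mul, mul_one]
    exact this ▸ Subalgebra.smul_mem _ (one_tmul_mem a) c
  | add x y hx hy => simpa using add_mem hx hy

theorem exists_finite_forall_map_withCoeffsIn_le [Algebra.FiniteType k A]
    (f : R ⊗[k] A →ₐ[R] R ⊗[k] B) :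
    ∃ t : Set R, t.Finite ∧ ∀ S : Subalgebra k R, t ⊆ S →
      (withCoeffsIn A S).map (f.restrictScalars S) ≤ withCoeffsIn B S := by
  obtain ⟨s, hs⟩ := Algebra.FiniteType.out (R := k) (A := A)
  choose t t_finite ht using fun a => exists_finite_forall_mem_withCoeffsIn (f (1 ⊗ₜ a))
  refine ⟨⋃ a ∈ s, t a, s.finite_toSet.biUnion fun a _ => t_finite a, fun S hS => ?_⟩
  exact map_withCoeffsIn_le hs f fun a ha =>
    ht a S ((Set.subset_biUnion_of_mem (u := t) ha).trans hS)

theorem exists_fg_subalgebra_nonempty_algEquiv_tensorProduct [Algebra.FiniteType k A]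
    [Algebra.FiniteType k B] [Module.Flat k A] [Module.Flat k B]
    (e : R ⊗[k] A ≃ₐ[R] R ⊗[k] B) :
    ∃ S : Subalgebra k R, S.FG ∧ Nonempty (S ⊗[k] A ≃ₐ[S] S ⊗[k] B) := by
  obtain ⟨t, t_finite, ht⟩ := exists_finite_forall_map_withCoeffsIn_le e.toAlgHom
  obtain ⟨u, u_finite, hu⟩ := exists_finite_forall_map_withCoeffsIn_le e.symm.toAlgHom
  let S := Algebra.adjoin k (t ∪ u)
  have hS : t ∪ u ⊆ S := Algebra.subset_adjoin
  let eS : R ⊗[k] A ≃ₐ[S] R ⊗[k] B := e.restrictScalars S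
  have map_eq : (withCoeffsIn A S).map (eS : R ⊗[k] A →ₐ[S] R ⊗[k] B) = withCoeffsIn B S := by
    refine le_antisymm (ht S (Set.subset_union_left.trans hS)) fun y hy => ?_
    exact ⟨e.symm y, hu S (Set.subset_union_right.trans hS) ⟨y, hy, rfl⟩, e.apply_symm_apply y⟩
  exact ⟨S, Subalgebra.fg_def.mpr ⟨_, t_finite.union u_finite, rfl⟩,
    ⟨(tensorEquivWithCoeffsIn A S).trans <| (eS.subalgebraMap _).trans <|
      (Subalgebra.equivOfEq _ _ map_eq).trans (tensorEquivWithCoeffsIn B S).symm⟩⟩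

end Coefficients

section Tower

variable (k S K : Type*) {A B : Type*} [CommSemiring k] [CommSemiring S] [Algebra k S]
  [CommSemiring K] [Algebra k K] [Algebra S K] [IsScalarTower k S K]
  [Semiring A] [Algebra k A] [Semiring B] [Algebra k B]

variable (A) in
/-- Base change from `k` to `S` and then to `K` is base change from `k` to `K`. Unlike in
`Algebra.TensorProduct.cancelBaseChange`, the algebra `A` need not be commutative. -/
def towerBaseChangeEquiv : K ⊗[S] (S ⊗[k] A) ≃ₐ[K] K ⊗[k] A :=
  (Algebra.TensorProduct.assoc k S K K S A).symm.trans <|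
    Algebra.TensorProduct.congr (Algebra.TensorProduct.rid S K K) AlgEquiv.refl

variable {k S}

/-- The base change along `S → K` of an isomorphism between base changes from `k` to `S`. -/
def congrBaseChangeOfTower (e : S ⊗[k] A ≃ₐ[S] S ⊗[k] B) : K ⊗[k] A ≃ₐ[K] K ⊗[k] B :=
  (towerBaseChangeEquiv k S K A).symm.trans <|
    (Algebra.TensorProduct.congr AlgEquiv.refl e).trans <| towerBaseChangeEquiv k S K B

end Tower

universe u

theorem exists_finite_field_nonempty_algHom (k : Type u) (S : Type*) [CommRing k]
    [IsJacobsonRing k] [CommRing S] [Nontrivial S] [Algebra k S] [Algebra.FiniteType k S] :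
    ∃ (K : Type u) (_ : Field K) (_ : Algebra k K), Module.Finite k K ∧ Nonempty (S →ₐ[k] K) := by
  obtain ⟨m, hm⟩ := Ideal.exists_maximal S
  let _ : Field (S ⧸ m) := Ideal.Quotient.field m
  have residue_finite : Module.Finite k (S ⧸ m) := finite_of_finite_type_of_isJacobsonRing k _
  have : Small.{u} (S ⧸ m) := Module.Finite.small k _
  let e : (S ⧸ m) ≃ₐ[k] Shrink.{u} (S ⧸ m) := (Shrink.algEquiv k _).symm
  exact ⟨Shrink.{u} (S ⧸ m), inferInstance, inferInstance, Module.Finite.equiv e.toLinearEquiv,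
    ⟨e.toAlgHom.comp (Ideal.Quotient.mkₐ k m)⟩⟩

theorem exists_finite_field_nonempty_algEquiv_tensorProduct {k : Type u} {R A B : Type*}
    [CommRing k] [IsJacobsonRing k] [CommRing R] [Nontrivial R] [Algebra k R]
    [Semiring A] [Algebra k A] [Algebra.FiniteType k A] [Module.Flat k A]
    [Semiring B] [Algebra k B] [Algebra.FiniteType k B] [Module.Flat k B]
    (e : R ⊗[k] A ≃ₐ[R] R ⊗[k] B) :
    ∃ (K : Type u) (_ : Field K) (_ : Algebra k K),
      Module.Finite k K ∧ Nonempty (K ⊗[k] A ≃ₐ[K] K ⊗[k] B) := by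
  obtain ⟨S, S_fg, ⟨eS⟩⟩ := exists_fg_subalgebra_nonempty_algEquiv_tensorProduct e
  have : Algebra.FiniteType k S := S.fg_iff_finiteType.mp S_fg
  obtain ⟨K, _, _, K_finite, ⟨f⟩⟩ := exists_finite_field_nonempty_algHom k S
  let _ : Algebra S K := f.toRingHom.toAlgebra
  have : IsScalarTower k S K := .of_algebraMap_eq' f.comp_algebraMap.symm
  exact ⟨K, _, _, K_finite, ⟨congrBaseChangeOfTower K eS⟩⟩

/-- The base change to `R` of the monoid algebra of `M` over `k` is its monoid algebra over `R`.
Unlike in `MonoidAlgebra.scalarTensorEquiv`, the monoid need not be commutative. -/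
noncomputable def tensorMonoidAlgebraEquiv (k R M : Type*) [CommSemiring k] [CommSemiring R]
    [Algebra k R] [Monoid M] : R ⊗[k] MonoidAlgebra k M ≃ₐ[R] MonoidAlgebra R M :=
  let ι : MonoidAlgebra k M →ₐ[k] R ⊗[k] MonoidAlgebra k M := Algebra.TensorProduct.includeRight
  AlgEquiv.ofAlgHom
    (AlgHom.liftEquiv k R _ _ (MonoidAlgebra.mapAlgHom M (Algebra.ofId k R)))
    (MonoidAlgebra.lift R _ M (ι.toMonoidHom.comp (MonoidAlgebra.of k M)))
    (by ext; simp [ι])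
    (by ext; simp [ι])

theorem isomorphism_problem_char_zero_reduces_to_number_fields_general {k : Type u}
    {R G H : Type*} [CommRing k] [IsJacobsonRing k] [CommRing R] [Nontrivial R] [Algebra k R]
    [Monoid G] [Monoid.FG G] [Monoid H] [Monoid.FG H]
    (e : MonoidAlgebra R G ≃ₐ[R] MonoidAlgebra R H) :
    ∃ (K : Type u) (_ : Field K) (_ : Algebra k K),
      Module.Finite k K ∧ Nonempty (MonoidAlgebra K G ≃ₐ[K] MonoidAlgebra K H) := by
  obtain ⟨K, _, _, K_finite, ⟨eK⟩⟩ := exists_finite_field_nonempty_algEquiv_tensorProduct <|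
    (tensorMonoidAlgebraEquiv k R G).trans <| e.trans (tensorMonoidAlgebraEquiv k R H).symm
  exact ⟨K, _, _, K_finite,
    ⟨(tensorMonoidAlgebraEquiv k K G).symm.trans <| eK.trans (tensorMonoidAlgebraEquiv k K H)⟩⟩

/-- Let `F` be a field of characteristic `0` and let `G` and `H` be finite groups. If
`FG ≅ FH` as `F`-algebras, then there is a field `F₀` of characteristic `0` which is
finite-dimensional over `ℚ` (a number field) with `F₀G ≅ F₀H` as `F₀`-algebras. -/
theorem isomorphism_problem_char_zero_reduces_to_number_fields
    (F : Type*) [Field F] [CharZero F] (G H : Type*) [Group G] [Group H] [Finite G] [Finite H]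
    (h : Nonempty (MonoidAlgebra F G ≃ₐ[F] MonoidAlgebra F H)) :
    ∃ (F₀ : Type) (_ : Field F₀) (_ : CharZero F₀),
      FiniteDimensional ℚ F₀ ∧
      Nonempty (MonoidAlgebra F₀ G ≃ₐ[F₀] MonoidAlgebra F₀ H) := by
  obtain ⟨e⟩ := h
  obtain ⟨K, _, _, K_finite, eK⟩ :=
    isomorphism_problem_char_zero_reduces_to_number_fields_general (k := ℚ) e
  have : CharZero K := algebraRat.charZero K
  obtain rfl : ‹Algebra ℚ K› = DivisionRing.toRatAlgebra := Subsingleton.elim _ _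
  exact ⟨K, _, this, K_finite, eK⟩
end

section
/- Let p be a prime, let F be a field of characteristic p, and let G and H be finite groups. If the group algebras FG and FH are isomorphic as F-algebras, then there exists a finite field F₀ of characteristic p such that F₀G and F₀H are isomorphic as F₀-algebras. -/
/-! An isomorphism `R[G] ≃ R[H]` and its inverse are determined by the images of finitely many
monoid generators, so only finitely many coefficients of `R` occur in them. Over the subring `A`
generated by these coefficients the isomorphism restricts to `A[G] ≃ A[H]`. As `A` is a finitely
generated ring, the Nullstellensatz over `ℤ` makes its residue fields at maximal ideals finite, and
base change along `A → A ⧸ m` yields the isomorphism over a finite field. -/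

open MonoidAlgebra

section FiniteResidueField

instance isJacobsonRing_int : IsJacobsonRing ℤ := by
  refine isJacobsonRing_iff_prime_eq.mpr fun P hP ↦ ?_
  rcases eq_or_ne P ⊥ with rfl | hP_ne_bot
  · refine eq_bot_iff.mpr fun x hx ↦ ?_
    have isUnit_of_mem_jacobson : IsUnit (x * (2 * x) + 1) := Ideal.mem_jacobson_bot.mp hx _
    have eq_one : x * (2 * x) + 1 = 1 :=
      (Int.isUnit_iff.mp isUnit_of_mem_jacobson).resolve_right fun h ↦ by nlinarith [sq_nonneg x]
    simpa using eq_one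
  · have : P.IsMaximal := hP.isMaximal hP_ne_bot
    exact Ideal.jacobson_eq_self_of_isMaximal

theorem finite_of_field_of_finiteType_int (K : Type*) [Field K] [Algebra.FiniteType ℤ K] :
    Finite K := by
  have : Module.Finite ℤ K := finite_of_finite_type_of_isJacobsonRing ℤ K
  -- In characteristic zero `K` would be an integral extension of `ℤ`, making `ℤ` a field.
  have not_charZero : ¬ CharZero K := fun _ ↦ Int.not_isField <|
    isField_of_isIntegral_of_isField (algebraMap ℤ K).injective_int (Field.toIsField K)
  obtain ⟨p, _⟩ := CharP.exists K
  have : NeZero p := ⟨by rintro rfl; exact not_charZero (CharP.charP_to_charZero K)⟩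
  let : Algebra (ZMod p) K := ZMod.algebra K p
  have : Module.Finite (ZMod p) K := .of_restrictScalars_finite ℤ (ZMod p) K
  exact Module.finite_of_finite (ZMod p)

theorem exists_ringHom_finite_field (A : Type*) [CommRing A] [Nontrivial A]
    [Algebra.FiniteType ℤ A] :
    ∃ (K : Type) (_ : Field K) (_ : Finite K), Nonempty (A →+* K) := by
  obtain ⟨m, _⟩ := Ideal.exists_maximal A
  let : Field (A ⧸ m) := Ideal.Quotient.field m
  have := Algebra.FiniteType.of_surjective (Ideal.Quotient.mk m).toIntAlgHom
    Ideal.Quotient.mk_surjective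
  have : Finite (A ⧸ m) := finite_of_field_of_finiteType_int (A ⧸ m)
  exact ⟨Shrink.{0} (A ⧸ m), inferInstance, inferInstance,
    ⟨(Shrink.ringEquiv.{0} (A ⧸ m)).symm.toRingHom.comp (Ideal.Quotient.mk m)⟩⟩

end FiniteResidueField

section BaseChange

variable {A B G H K : Type*} [CommSemiring A] [CommSemiring B] [Monoid G] [Monoid H] [Monoid K]

/-- The base change along `f : A →+* B` of a homomorphism of monoid algebras over `A`. It is built
from the universal property of `B[G]` instead of `B ⊗[A] A[G]`, so that `f` need not come from an
`Algebra` instance. -/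
noncomputable def baseChangeAlgHom (f : A →+* B) (φ : A[G] →ₐ[A] A[H]) : B[G] →ₐ[B] B[H] :=
  lift B B[H] G ((mapRingHom H f : A[H] →* B[H]).comp ((φ : A[G] →* A[H]).comp (of A G)))

theorem baseChangeAlgHom_single_one (f : A →+* B) (φ : A[G] →ₐ[A] A[H]) (g : G) :
    baseChangeAlgHom f φ (single g 1) = mapRingHom H f (φ (single g 1)) := by
  simp [baseChangeAlgHom]

theorem baseChangeAlgHom_comp_mapRingHom (f : A →+* B) (φ : A[G] →ₐ[A] A[H]) :
    (baseChangeAlgHom f φ : B[G] →+* B[H]).comp (mapRingHom G f) =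
      (mapRingHom H f).comp (φ : A[G] →+* A[H]) := by
  refine ringHom_ext (fun a ↦ ?_) (fun g ↦ ?_)
  · have hφ : φ (single 1 a) = single 1 a := φ.commutes a
    have hf : baseChangeAlgHom f φ (single 1 (f a)) = single 1 (f a) :=
      (baseChangeAlgHom f φ).commutes (f a)
    simp [hφ, hf]
  · simp [baseChangeAlgHom_single_one]

theorem baseChangeAlgHom_id (f : A →+* B) : baseChangeAlgHom f (.id A A[G]) = .id B B[G] :=
  algHom_ext (fun g ↦ by simp [baseChangeAlgHom_single_one]) (by ext)

theorem baseChangeAlgHom_comp (f : A →+* B) (ψ : A[H] →ₐ[A] A[K]) (φ : A[G] →ₐ[A] A[H]) :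
    baseChangeAlgHom f (ψ.comp φ) = (baseChangeAlgHom f ψ).comp (baseChangeAlgHom f φ) := by
  refine algHom_ext (fun g ↦ ?_) (by ext)
  have hψ := RingHom.congr_fun (baseChangeAlgHom_comp_mapRingHom f ψ) (φ (single g 1))
  simpa [baseChangeAlgHom_single_one] using hψ.symm

/-- The base change along `f : A →+* B` of an isomorphism of monoid algebras over `A`. -/
noncomputable def baseChangeAlgEquiv (f : A →+* B) (e : A[G] ≃ₐ[A] A[H]) : B[G] ≃ₐ[B] B[H] :=
  .ofAlgHom (baseChangeAlgHom f e) (baseChangeAlgHom f e.symm)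
    (by rw [← baseChangeAlgHom_comp, e.comp_symm, baseChangeAlgHom_id])
    (by rw [← baseChangeAlgHom_comp, e.symm_comp, baseChangeAlgHom_id])

end BaseChange

section Descent

theorem exists_fg_subalgebra_coeff_mem (k : Type*) {R M : Type*} [CommSemiring k] [CommSemiring R]
    [Algebra k R] {T : Set R[M]} (hT : T.Finite) :
    ∃ A : Subalgebra k R, A.FG ∧ ∀ x ∈ T, ∀ m, x.coeff m ∈ A := by
  have coeffs_finite : (⋃ x ∈ T, Set.range x.coeff).Finite :=
    hT.biUnion fun x _ ↦ x.coeff.finite_range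
  exact ⟨Algebra.adjoin k _, Subalgebra.fg_def.mpr ⟨_, coeffs_finite, rfl⟩,
    fun x hx m ↦ Algebra.subset_adjoin (Set.mem_biUnion hx ⟨m, rfl⟩)⟩

theorem adjoin_of_image_eq_top (A : Type*) {G : Type*} [CommSemiring A] [Monoid G] {s : Set G}
    (hs : Submonoid.closure s = ⊤) : Algebra.adjoin A (of A G '' s) = ⊤ := by
  rw [Set.image_eq_range, Algebra.adjoin_range_eq_range_freeAlgebra_lift, AlgHom.range_eq_top]
  exact freeAlgebra_lift_of_surjective_of_closure hs

variable {k R G H : Type*} [CommSemiring k] [CommSemiring R] [Algebra k R] [Monoid G] [Monoid H]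

/-- The copy of `A[G]` inside `R[G]`, for a subalgebra `A` of `R`: the elements of `R[G]` all of
whose coefficients lie in `A`. It is encoded as an `A`-subalgebra of `R[G]`, so that restrictions of
`R`-linear maps to it are `A`-linear. -/
noncomputable def coeffSubalgebra (A : Subalgebra k R) (G : Type*) [Monoid G] :
    Subalgebra A R[G] :=
  (mapAlgHom G (Algebra.ofId A R)).range

theorem mem_coeffSubalgebra {A : Subalgebra k R} {x : R[G]} :
    x ∈ coeffSubalgebra A G ↔ ∀ g, x.coeff g ∈ A := by
  have range_eq : Set.range (mapAlgHom G (Algebra.ofId A R)) =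
      {x | ∀ g, x.coeff g ∈ Set.range (algebraMap A R)} :=
    range_map (algebraMap A R).toAddMonoidHom
  exact (Set.ext_iff.mp range_eq x).trans (by simp)

/-- The identification of `A[G]` with its copy inside `R[G]`. -/
noncomputable def coeffSubalgebraEquiv (A : Subalgebra k R) (G : Type*) [Monoid G] :
    A[G] ≃ₐ[A] coeffSubalgebra A G :=
  .ofInjective _ (map_injective (algebraMap A R).toAddMonoidHom Subtype.val_injective)

theorem coeffSubalgebra_eq_adjoin (A : Subalgebra k R) {s : Set G}
    (hs : Submonoid.closure s = ⊤) :
    coeffSubalgebra A G = Algebra.adjoin A (of R G '' s) := by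
  rw [coeffSubalgebra, ← Algebra.map_top, ← adjoin_of_image_eq_top A hs, AlgHom.map_adjoin,
    Set.image_image]
  simp

theorem exists_fg_map_coeffSubalgebra_le (k : Type*) [CommSemiring k] [Algebra k R] [Monoid.FG G]
    (φ : R[G] →ₐ[R] R[H]) :
    ∃ A₀ : Subalgebra k R, A₀.FG ∧ ∀ A ≥ A₀,
      (coeffSubalgebra A G).map (φ.restrictScalars A) ≤ coeffSubalgebra A H := by
  obtain ⟨s, hs, s_finite⟩ := Monoid.fg_iff.mp ‹Monoid.FG G›
  obtain ⟨A₀, hA₀, coeff_mem⟩ :=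
    exists_fg_subalgebra_coeff_mem k ((s_finite.image (of R G)).image φ)
  refine ⟨A₀, hA₀, fun A hA ↦ ?_⟩
  rw [coeffSubalgebra_eq_adjoin A hs, AlgHom.map_adjoin, Algebra.adjoin_le_iff]
  exact fun y hy ↦ mem_coeffSubalgebra.mpr fun h ↦ hA (coeff_mem y hy h)

theorem exists_fg_subalgebra_nonempty_algEquiv (k : Type*) [CommSemiring k] [Algebra k R]
    [Monoid.FG G] [Monoid.FG H] (e : R[G] ≃ₐ[R] R[H]) :
    ∃ A : Subalgebra k R, A.FG ∧ Nonempty (A[G] ≃ₐ[A] A[H]) := by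
  obtain ⟨A₁, hA₁, map_le⟩ := exists_fg_map_coeffSubalgebra_le k (e : R[G] →ₐ[R] R[H])
  obtain ⟨A₂, hA₂, map_symm_le⟩ := exists_fg_map_coeffSubalgebra_le k (e.symm : R[H] →ₐ[R] R[G])
  let A := A₁ ⊔ A₂
  have map_eq : (coeffSubalgebra A G).map (e.restrictScalars A : R[G] →ₐ[A] R[H]) =
      coeffSubalgebra A H :=
    (map_le A le_sup_left).antisymm fun y hy ↦
      ⟨e.symm y, map_symm_le A le_sup_right ⟨y, hy, rfl⟩, e.apply_symm_apply y⟩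
  exact ⟨A, hA₁.sup hA₂, ⟨(coeffSubalgebraEquiv A G).trans <|
    ((e.restrictScalars A).subalgebraMap _).trans <|
      (Subalgebra.equivOfEq _ _ map_eq).trans (coeffSubalgebraEquiv A H).symm⟩⟩

end Descent

theorem isomorphism_problem_char_p_reduces_to_finite_fields_general
    (p : ℕ) (R : Type*) [CommRing R] [Nontrivial R] [CharP R p]
    (G H : Type*) [Monoid G] [Monoid H] [Monoid.FG G] [Monoid.FG H]
    (h : Nonempty (MonoidAlgebra R G ≃ₐ[R] MonoidAlgebra R H)) :
    ∃ (F₀ : Type) (_ : Field F₀) (_ : Finite F₀), ringChar F₀ ∣ p ∧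
      Nonempty (MonoidAlgebra F₀ G ≃ₐ[F₀] MonoidAlgebra F₀ H) := by
  obtain ⟨e⟩ := h
  obtain ⟨A, hA, ⟨eA⟩⟩ := exists_fg_subalgebra_nonempty_algEquiv ℤ e
  have : Algebra.FiniteType ℤ A := A.fg_iff_finiteType.mp hA
  obtain ⟨F₀, _, _, ⟨f⟩⟩ := exists_ringHom_finite_field A
  have p_eq_zero : (p : A) = 0 := Subtype.ext (by simp)
  exact ⟨F₀, _, ‹_›, ringChar.dvd (by simpa using congrArg f p_eq_zero),
    ⟨baseChangeAlgEquiv f eA⟩⟩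

/-- Let `p` be a prime, `F` a field of characteristic `p`, and `G`, `H` finite groups. If
`FG ≅ FH` as `F`-algebras, then there is a finite field `F₀` of characteristic `p` with
`F₀G ≅ F₀H` as `F₀`-algebras. -/
theorem isomorphism_problem_char_p_reduces_to_finite_fields
    (p : ℕ) (hp : p.Prime) (F : Type*) [Field F] [CharP F p]
    (G H : Type*) [Group G] [Group H] [Finite G] [Finite H]
    (h : Nonempty (MonoidAlgebra F G ≃ₐ[F] MonoidAlgebra F H)) :
    ∃ (F₀ : Type) (_ : Field F₀) (_ : Finite F₀) (_ : CharP F₀ p),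
      Nonempty (MonoidAlgebra F₀ G ≃ₐ[F₀] MonoidAlgebra F₀ H) := by
  obtain ⟨F₀, _, _, hdvd, e⟩ :=
    isomorphism_problem_char_p_reduces_to_finite_fields_general p F G H h
  have hchar := ((Nat.dvd_prime hp).mp hdvd).resolve_left CharP.ringChar_ne_one
  exact ⟨F₀, _, ‹_›, ringChar.of_eq hchar, e⟩
end

section
/- Let ℙ ⊆ E ⊆ F be fields inside a fixed algebraic closure, where ℙ is a prime field, E/ℙ is purely transcendental of finite transcendence degree (i.e., E = ℙ(X₁,…,Xₘ) for a finite algebraically independent family X₁,…,Xₘ over ℙ), and F/E is a finite normal extension. Then there exists a finite algebraic extension L of E (inside the algebraic closure) such that L/ℙ is purely transcendental of finite transcendence degree and the compositum LF is a finite Galois extension of L. -/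
/-!
The extension `F / E` has finite inseparable exponent: if `q` is the exponential characteristic,
there is an `n` such that `x ^ q ^ n` is separable over `E` for every `x ∈ F`. Take
`L = E ^ (1 / q ^ n)`. The inverse of the `n`-th iterate of Frobenius is an isomorphism `E ≃ L`, so
it carries an algebraically independent generating set of `E` to one of `L`, and the separability
of `x ^ q ^ n` over `E` to that of `x` over `L`. Hence `LF` is generated over `L` by separable
elements, and it is a splitting field over `L` of any polynomial of which `F` is a splitting field
over `E`.
-/

/-- A subfield `K` of `Ω` is purely transcendental of finite transcendence degree over the
prime field `ℙ = ⊥` if it is generated (as a field; every subfield contains the prime field)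
by a finite set which is algebraically independent over `ℙ`. -/
def IsPurelyTranscendentalFinOverPrimeField {Ω : Type*} [Field Ω] (K : Subfield Ω) : Prop :=
  ∃ s : Finset Ω, (s : Set Ω) ⊆ (K : Set Ω) ∧
    AlgebraicIndependent (⊥ : Subfield Ω) ((↑) : ↥(s : Set Ω) → Ω) ∧
    Subfield.closure (s : Set Ω) = K

open IntermediateField

namespace IsPurelyTranscendentalFinOverPrimeField

variable {Ω Ω' : Type*} [Field Ω] [Field Ω'] {K : Subfield Ω}

theorem exists_finite_closure_eq (hK : IsPurelyTranscendentalFinOverPrimeField K) :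
    ∃ S : Set Ω, S.Finite ∧ Subfield.closure S = K := by
  obtain ⟨s, -, -, hs⟩ := hK
  exact ⟨s, s.finite_toSet, hs⟩

theorem map (hK : IsPurelyTranscendentalFinOverPrimeField K) (σ : Ω →+* Ω') :
    IsPurelyTranscendentalFinOverPrimeField (K.map σ) := by
  classical
  obtain ⟨s, -, hind, hgen⟩ := hK
  have hgen' : Subfield.closure (σ '' s) = K.map σ := by
    rw [← hgen, RingHom.map_field_closure]
  let σ₀ : (⊥ : Subfield Ω) →+* (⊥ : Subfield Ω') :=
    σ.restrict ⊥ ⊥ fun x hx ↦ Subfield.map_bot σ ▸ ⟨x, hx, rfl⟩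
  have hσ₀ : Function.Surjective σ₀ := by
    rintro ⟨y, hy⟩
    obtain ⟨x, hx, rfl⟩ := (Subfield.map_bot σ).symm ▸ hy
    exact ⟨⟨x, hx⟩, rfl⟩
  have hind' : AlgebraicIndependent (⊥ : Subfield Ω') ((↑) : ↥(σ '' s) → Ω') := by
    have := (hind.ringHom_of_comp_eq σ₀ σ hσ₀ σ.injective rfl).coe_range
    rwa [Set.range_comp, Subtype.range_coe] at this
  refine ⟨s.image σ, ?_, ?_, ?_⟩ <;> rw [Finset.coe_image]
  exacts [hgen' ▸ Subfield.subset_closure, hind', hgen']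

end IsPurelyTranscendentalFinOverPrimeField

section Separability

theorem exists_forall_mem_isSeparable_pow {K Ω : Type*} [Field K] [Field Ω] [Algebra K Ω]
    (F : IntermediateField K Ω) [FiniteDimensional K F] (q : ℕ) [ExpChar K q] :
    ∃ n : ℕ, ∀ x ∈ F, IsSeparable K (x ^ q ^ n) := by
  have : ExpChar (separableClosure K F) q :=
    expChar_of_injective_algebraMap (algebraMap K (separableClosure K F)).injective q
  refine ⟨IsPurelyInseparable.exponent (separableClosure K F) F, fun x hx ↦ ?_⟩
  obtain ⟨y, hy⟩ := IsPurelyInseparable.exponent_def' (separableClosure K F) q (⟨x, hx⟩ : F)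
  have hsep := (mem_separableClosure_iff.1 y.2).map F.val F.val.injective
  have hyx : F.val y = x ^ q ^ IsPurelyInseparable.exponent (separableClosure K F) F :=
    congrArg F.val hy
  rwa [hyx] at hsep

theorem isSeparable_subfield_map {Ω Ω' : Type*} [Field Ω] [Field Ω'] (σ : Ω ≃+* Ω')
    {K : Subfield Ω} {x : Ω} (hx : IsSeparable K x) :
    IsSeparable (K.map (σ : Ω →+* Ω')) (σ x) :=
  hx.of_equiv_equiv (A₂ := K.map (σ : Ω →+* Ω')) (σ.subringMap (s := K.toSubring)) σ rfl

end Separability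

section FrobeniusRoots

variable {Ω : Type*} [Field Ω] (q : ℕ) [ExpChar Ω q] (n : ℕ) (K : Subfield Ω)

/-- The field `K ^ (1 / q ^ n)` of all elements of `Ω` whose `q ^ n`-th power lies in `K`, where `q`
is the exponential characteristic of `Ω`; it is `K` itself in characteristic zero. -/
def frobeniusRoots : Subfield Ω :=
  K.comap (iterateFrobenius Ω q n)

theorem le_frobeniusRoots : K ≤ frobeniusRoots q n K :=
  fun _ hx ↦ pow_mem hx _

variable [PerfectRing Ω q]

theorem map_iterateFrobeniusEquiv_symm :
    K.map ((iterateFrobeniusEquiv Ω q n).symm : Ω →+* Ω) = frobeniusRoots q n K :=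
  SetLike.coe_injective ((iterateFrobeniusEquiv Ω q n).symm.toEquiv.image_eq_preimage_symm K)

variable {K}

theorem IsPurelyTranscendentalFinOverPrimeField.frobeniusRoots
    (hK : IsPurelyTranscendentalFinOverPrimeField K) :
    IsPurelyTranscendentalFinOverPrimeField (frobeniusRoots q n K) :=
  map_iterateFrobeniusEquiv_symm q n K ▸ hK.map _

variable {q n} in
theorem isSeparable_frobeniusRoots {x : Ω} (hx : IsSeparable K (x ^ q ^ n)) :
    IsSeparable (frobeniusRoots q n K) x := by
  have := isSeparable_subfield_map (iterateFrobeniusEquiv Ω q n).symm hx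
  rwa [map_iterateFrobeniusEquiv_symm, ← iterateFrobeniusEquiv_def, RingEquiv.symm_apply_apply]
    at this

theorem finiteDimensional_frobeniusRoots {S : Set Ω} (hS : S.Finite)
    (hSK : Subfield.closure S = K) :
    FiniteDimensional K (Subfield.extendScalars (le_frobeniusRoots q n K)) := by
  let σ : Ω ≃+* Ω := (iterateFrobeniusEquiv Ω q n).symm
  have hle : Subfield.extendScalars (le_frobeniusRoots q n K) ≤ adjoin K (σ '' S) := by
    rw [Subfield.extendScalars_le_iff, ← map_iterateFrobeniusEquiv_symm, ← hSK,
      RingHom.map_field_closure, Subfield.closure_le]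
    exact subset_adjoin _ _
  have : Finite (σ '' S) := hS.image σ
  have : FiniteDimensional K (adjoin K (σ '' S)) := by
    refine finiteDimensional_adjoin ?_
    rintro _ ⟨y, hy, rfl⟩
    refine IsIntegral.of_pow (expChar_pow_pos Ω q n) ?_
    have hσy : σ y ^ q ^ n = y := (iterateFrobeniusEquiv Ω q n).apply_symm_apply y
    rw [hσy]
    exact isIntegral_algebraMap (x := (⟨y, hSK ▸ Subfield.subset_closure hy⟩ : K))
  exact Module.Finite.of_injective (inclusion hle).toLinearMap (inclusion hle).injective

end FrobeniusRoots

section Compositum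

variable {K L Ω : Type*} [Field K] [Field L] [Field Ω] [Algebra K L] [Algebra L Ω] [Algebra K Ω]
  [IsScalarTower K L Ω]

variable (L) in
theorem adjoin_coe_adjoin (S : Set Ω) : adjoin L (adjoin K S : Set Ω) = adjoin L S := by
  refine le_antisymm (adjoin_le_iff.2 ?_) (adjoin.mono L _ _ (subset_adjoin K S))
  have hle : adjoin K S ≤ (adjoin L S).restrictScalars K := adjoin_le_iff.2 (subset_adjoin L S)
  exact hle

variable (L) (F : IntermediateField K Ω)

theorem finiteDimensional_adjoin_coe [FiniteDimensional K F] :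
    FiniteDimensional L (adjoin L (F : Set Ω)) := by
  obtain ⟨s, rfl⟩ : F.FG := essFiniteType_iff.1 inferInstance
  rw [adjoin_coe_adjoin]
  refine finiteDimensional_adjoin fun x hx ↦ ?_
  exact ((IsIntegral.of_finite K (⟨x, subset_adjoin K _ hx⟩ : adjoin K (s : Set Ω))).map
    (adjoin K (s : Set Ω)).val).tower_top

theorem isSplittingField_map_adjoin_coe (p : Polynomial K) [p.IsSplittingField K F] :
    (p.map (algebraMap K L)).IsSplittingField L (adjoin L (F : Set Ω)) := by
  obtain ⟨hsplits, hF⟩ := isSplittingField_iff.1 ‹p.IsSplittingField K F›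
  have hroots : (p.map (algebraMap K L)).rootSet Ω = p.rootSet Ω := by
    simp [Set.ext_iff, Polynomial.mem_rootSet']
  rw [hF, adjoin_coe_adjoin, ← hroots]
  refine adjoin_rootSet_isSplittingField ?_
  rw [Polynomial.map_map, ← IsScalarTower.algebraMap_eq]
  exact hsplits.of_algHom F.val

variable {L F} in
theorem isGalois_adjoin_coe [FiniteDimensional K F] [Normal K F]
    (hsep : ∀ x ∈ F, IsSeparable L x) : IsGalois L (adjoin L (F : Set Ω)) := by
  obtain ⟨p, _⟩ := Normal.exists_isSplittingField K F
  have := isSplittingField_map_adjoin_coe L F p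
  exact isGalois_iff.2 ⟨(isSeparable_adjoin_iff_isSeparable L Ω).2 hsep,
    Normal.of_isSplittingField (p.map (algebraMap K L))⟩

end Compositum

section SubfieldCompositum

variable {Ω : Type*} [Field Ω]

theorem extendScalars_sup_eq_adjoin (L F : Subfield Ω) :
    Subfield.extendScalars (le_sup_left : L ≤ L ⊔ F) = adjoin L (F : Set Ω) := by
  refine le_antisymm ?_ (adjoin_le_iff.2 fun x hx ↦ (le_sup_right : F ≤ L ⊔ F) hx)
  rw [Subfield.extendScalars_le_iff]
  exact sup_le (fun x hx ↦ (adjoin L (F : Set Ω)).algebraMap_mem ⟨x, hx⟩) (subset_adjoin L _)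

variable {E L F : Subfield Ω} (hEL : E ≤ L) (hEF : E ≤ F)
  [FiniteDimensional E (Subfield.extendScalars hEF)]
include hEL hEF

theorem finiteDimensional_extendScalars_sup :
    FiniteDimensional L (Subfield.extendScalars (le_sup_left : L ≤ L ⊔ F)) := by
  let : Algebra E L := (Subfield.inclusion hEL).toAlgebra
  have : IsScalarTower E L Ω := .of_algebraMap_eq fun _ ↦ rfl
  rw [extendScalars_sup_eq_adjoin]
  exact finiteDimensional_adjoin_coe L (Subfield.extendScalars hEF)

theorem isGalois_extendScalars_sup [Normal E (Subfield.extendScalars hEF)]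
    (hsep : ∀ x ∈ F, IsSeparable L x) :
    IsGalois L (Subfield.extendScalars (le_sup_left : L ≤ L ⊔ F)) := by
  let : Algebra E L := (Subfield.inclusion hEL).toAlgebra
  have : IsScalarTower E L Ω := .of_algebraMap_eq fun _ ↦ rfl
  rw [extendScalars_sup_eq_adjoin]
  exact isGalois_adjoin_coe (F := Subfield.extendScalars hEF) hsep

end SubfieldCompositum

theorem exists_purely_transcendental_with_galois_compositum_general
    {Ω : Type*} [Field Ω] [PerfectField Ω] (E F : Subfield Ω) (hEF : E ≤ F)
    (hE : IsPurelyTranscendentalFinOverPrimeField E)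
    (hfin : letI := (Subfield.inclusion hEF).toAlgebra; FiniteDimensional E F)
    (hnorm : letI := (Subfield.inclusion hEF).toAlgebra; Normal E F) :
    ∃ L : Subfield Ω, ∃ hEL : E ≤ L,
      (letI := (Subfield.inclusion hEL).toAlgebra; FiniteDimensional E L) ∧
      IsPurelyTranscendentalFinOverPrimeField L ∧
      (letI := (Subfield.inclusion (le_sup_left : L ≤ L ⊔ F)).toAlgebra;
        FiniteDimensional L ↥(L ⊔ F) ∧ IsGalois L ↥(L ⊔ F)) := by
  obtain ⟨q, _⟩ := ExpChar.exists Ω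
  have : ExpChar E q := (algebraMap E Ω).expChar (algebraMap E Ω).injective q
  have : FiniteDimensional E (Subfield.extendScalars hEF) := hfin
  have : Normal E (Subfield.extendScalars hEF) := hnorm
  obtain ⟨n, hn⟩ := exists_forall_mem_isSeparable_pow (Subfield.extendScalars hEF) q
  obtain ⟨S, hS, hSE⟩ := hE.exists_finite_closure_eq
  have hEL : E ≤ frobeniusRoots q n E := le_frobeniusRoots q n E
  exact ⟨frobeniusRoots q n E, hEL, finiteDimensional_frobeniusRoots q n hS hSE,
    hE.frobeniusRoots q n, finiteDimensional_extendScalars_sup hEL hEF,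
    isGalois_extendScalars_sup hEL hEF fun x hx ↦ isSeparable_frobeniusRoots (hn x hx)⟩

/-- Let `ℙ ⊆ E ⊆ F` be fields inside a fixed algebraic closure `Ω`, where `ℙ` is the prime
field, `E/ℙ` is purely transcendental of finite transcendence degree, and `F/E` is a finite
normal extension. Then there is a finite algebraic extension `L` of `E` inside `Ω` such that
`L/ℙ` is purely transcendental of finite transcendence degree and the compositum `LF = L ⊔ F`
is a finite Galois extension of `L`. -/
theorem exists_purely_transcendental_with_galois_compositum
    {Ω : Type*} [Field Ω] [IsAlgClosed Ω] (E F : Subfield Ω) (hEF : E ≤ F)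
    (hE : IsPurelyTranscendentalFinOverPrimeField E)
    (hfin : letI := (Subfield.inclusion hEF).toAlgebra; FiniteDimensional E F)
    (hnorm : letI := (Subfield.inclusion hEF).toAlgebra; Normal E F) :
    ∃ L : Subfield Ω, ∃ hEL : E ≤ L,
      (letI := (Subfield.inclusion hEL).toAlgebra; FiniteDimensional E L) ∧
      IsPurelyTranscendentalFinOverPrimeField L ∧
      (letI := (Subfield.inclusion (le_sup_left : L ≤ L ⊔ F)).toAlgebra;
        FiniteDimensional L ↥(L ⊔ F) ∧ IsGalois L ↥(L ⊔ F)) :=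
  exists_purely_transcendental_with_galois_compositum_general E F hEF hE hfin hnorm
end

section
/- For every prime field ℙ and every positive integer n, there exist a prime q different from the characteristic of ℙ and a positive integer k such that: F[(C_q)^k] is not isomorphic to F[C_{q^k}] as F-algebras for every field extension F of ℙ with [F : ℙ] ≤ n, but E[(C_q)^k] is isomorphic to E[C_{q^k}] as E-algebras for some field extension E of ℙ. -/
/-!
Let `q` be a prime different from the characteristic of `F`. If `F` contains enough roots of unity
for a finite abelian group `G`, the Fourier transform identifies `F[G]` with a product of `|G|`
copies of `F`; so over a large field `F[G]` only remembers `|G|`. Conversely, over any `F` the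
algebra `F[(C_q)^k]` embeds into a product of copies of `F(ζ_q)`, and an isomorphism with
`F[C_{q^k}]` provides a unit of order `q^k` there, one of whose coordinates is a primitive `q^k`-th
root of unity in `F(ζ_q)`. When `[F : P]` is bounded, so is `[F(ζ_q) : P]`, and an extension of
bounded degree of a number field or of a finite field contains no primitive `q^k`-th root of unity
for large `k`.
-/

open Module

theorem finrank_monoidAlgebra (R M : Type*) [Semiring R] [StrongRankCondition R] :
    finrank R (MonoidAlgebra R M) = Nat.card M :=
  finrank_eq_nat_card_basis (MonoidAlgebra.basis M R)

section FourierTransform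

variable {F : Type*} [Field F] {G H : Type*} [CommGroup G] [CommGroup H]

/-- The Fourier transform of the group algebra `F[G]`: it evaluates an element of `F[G]` at all
characters `G →* Fˣ`, extended linearly to `F[G]`. -/
noncomputable def fourierTransform (F G : Type*) [Field F] [CommGroup G] :
    MonoidAlgebra F G →ₐ[F] ((G →* Fˣ) → F) :=
  AlgHom.pi fun χ => MonoidAlgebra.lift F F G ((Units.coeHom F).comp χ)

theorem linearIndependent_lift_characters :
    LinearIndependent F fun χ : G →* Fˣ =>
      (MonoidAlgebra.lift F F G ((Units.coeHom F).comp χ)).toLinearMap :=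
  (linearIndependent_toLinearMap F (MonoidAlgebra F G) F).comp _ <|
    (MonoidAlgebra.lift F F G).injective.comp fun _ _ h =>
      MonoidHom.ext fun g => Units.ext (DFunLike.congr_fun h g)

variable [Finite G] [Finite H] [HasEnoughRootsOfUnity F (Monoid.exponent G)]

theorem fourierTransform_injective : Function.Injective (fourierTransform F G) := by
  have := Fintype.ofFinite (G →* Fˣ)
  have card_characters : Fintype.card (G →* Fˣ) = finrank F (Dual F (MonoidAlgebra F G)) := by
    rw [Subspace.dual_finrank_eq, finrank_monoidAlgebra, ← Nat.card_eq_fintype_card,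
      CommGroup.card_monoidHom_of_hasEnoughRootsOfUnity]
  have characters_span :=
    (linearIndependent_lift_characters (F := F) (G := G)).span_eq_top_of_card_eq_finrank'
      card_characters
  rw [injective_iff_map_eq_zero]
  intro x hx
  have eval_eq_zero : Dual.eval F (MonoidAlgebra F G) x = 0 :=
    LinearMap.ext_on_range characters_span fun χ => congrFun hx χ
  exact (forall_dual_apply_eq_zero_iff F x).1 (DFunLike.congr_fun eval_eq_zero)

theorem fourierTransform_bijective : Function.Bijective (fourierTransform F G) := by
  have finrank_eq : finrank F (MonoidAlgebra F G) = finrank F ((G →* Fˣ) → F) := by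
    have := Fintype.ofFinite (G →* Fˣ)
    rw [finrank_monoidAlgebra, finrank_fintype_fun_eq_card, ← Nat.card_eq_fintype_card,
      CommGroup.card_monoidHom_of_hasEnoughRootsOfUnity]
  exact ⟨fourierTransform_injective,
    (LinearMap.injective_iff_surjective_of_finrank_eq_finrank finrank_eq
      (f := (fourierTransform F G).toLinearMap)).1 fourierTransform_injective⟩

theorem nonempty_monoidAlgebra_algEquiv_of_card_eq
    [HasEnoughRootsOfUnity F (Monoid.exponent H)] (hcard : Nat.card G = Nat.card H) :
    Nonempty (MonoidAlgebra F G ≃ₐ[F] MonoidAlgebra F H) := by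
  have card_characters : Nat.card (G →* Fˣ) = Nat.card (H →* Fˣ) := by
    simpa only [CommGroup.card_monoidHom_of_hasEnoughRootsOfUnity] using hcard
  obtain ⟨e⟩ := Finite.card_eq.1 card_characters
  exact ⟨(AlgEquiv.ofBijective _ fourierTransform_bijective).trans <|
    (AlgEquiv.piCongrLeft F (fun _ => F) e).trans
      (AlgEquiv.ofBijective _ fourierTransform_bijective).symm⟩

end FourierTransform

section LargeExtensions

universe u v

theorem hasEnoughRootsOfUnity_exponent_of_card_ne_zero (F G : Type*) [Field F] [IsSepClosed F]
    [Group G] (hG : (Nat.card G : F) ≠ 0) : HasEnoughRootsOfUnity F (Monoid.exponent G) := by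
  have : NeZero (Monoid.exponent G : F) :=
    ⟨ne_zero_of_dvd_ne_zero hG (Nat.cast_dvd_cast Group.exponent_dvd_nat_card)⟩
  infer_instance

/- The extension is the algebraic closure of a copy of `P` in the universe `v`, which may be smaller
than the universe of `P`. -/
theorem exists_extension_monoidAlgebra_algEquiv (P : Type u) [Field P] [Small.{v} P]
    (G H : Type*) [CommGroup G] [Finite G] [CommGroup H] [Finite H]
    (hcard : Nat.card G = Nat.card H) (hG : (Nat.card G : P) ≠ 0) :
    ∃ (E : Type v) (_ : Field E) (_ : Algebra P E),
      Nonempty (MonoidAlgebra E G ≃ₐ[E] MonoidAlgebra E H) := by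
  let ι : P →+* AlgebraicClosure (Shrink.{v} P) :=
    (algebraMap _ _).comp (Shrink.ringEquiv P).symm.toRingHom
  have hG' : (Nat.card G : AlgebraicClosure (Shrink.{v} P)) ≠ 0 := by
    simpa only [map_natCast] using (map_ne_zero ι).2 hG
  have := hasEnoughRootsOfUnity_exponent_of_card_ne_zero _ G hG'
  have := hasEnoughRootsOfUnity_exponent_of_card_ne_zero _ H (hcard ▸ hG')
  exact ⟨AlgebraicClosure (Shrink.{v} P), inferInstance, ι.toAlgebra,
    nonempty_monoidAlgebra_algEquiv_of_card_eq hcard⟩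

end LargeExtensions

theorem exists_orderOf_apply_eq_prime_pow {ι : Type*} [Nonempty ι] {M : ι → Type*}
    [∀ i, Monoid (M i)] {p k : ℕ} [Fact p.Prime] {x : ∀ i, M i} (hx : orderOf x = p ^ k) :
    ∃ i, orderOf (x i) = p ^ k := by
  have pow_eq_one (i : ι) : x i ^ p ^ k = 1 := congrFun (hx ▸ pow_orderOf_eq_one x) i
  cases k with
  | zero => exact ‹Nonempty ι›.elim fun i => ⟨i, by simpa using pow_eq_one i⟩
  | succ k =>
    have hlt : p ^ k < orderOf x :=
      hx ▸ Nat.pow_lt_pow_right (Fact.out : p.Prime).one_lt k.lt_succ_self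
    have x_pow_ne_one : x ^ p ^ k ≠ 1 :=
      pow_ne_one_of_lt_orderOf (pow_ne_zero _ (Fact.out : p.Prime).ne_zero) hlt
    obtain ⟨i, hi⟩ := Function.ne_iff.1 x_pow_ne_one
    exact ⟨i, orderOf_eq_prime_pow hi (pow_eq_one i)⟩

theorem exists_isPrimitiveRoot_of_monoidAlgebra_embedding {R L G H : Type*} [CommRing R] [Field L]
    [Algebra R L] [FaithfulSMul R L] [CommGroup G] [Finite G]
    [HasEnoughRootsOfUnity L (Monoid.exponent G)] [Monoid H]
    (f : MonoidAlgebra R H →+* MonoidAlgebra R G) (hf : Function.Injective f)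
    {q k : ℕ} [Fact q.Prime] {h : H} (hh : orderOf h = q ^ k) :
    ∃ ζ : L, IsPrimitiveRoot ζ (q ^ k) := by
  have := (algebraMap R L).domain_nontrivial
  let φ : H →* ((G →* Lˣ) → L) :=
    (((fourierTransform L G).toRingHom.comp
      (MonoidAlgebra.mapRingHom G (algebraMap R L))).comp f).toMonoidHom.comp (MonoidAlgebra.of R H)
  have φ_injective : Function.Injective φ :=
    fourierTransform_injective.comp <|
      (MonoidAlgebra.map_injective (algebraMap R L).toAddMonoidHom
        (FaithfulSMul.algebraMap_injective R L)).comp <| hf.comp MonoidAlgebra.of_injective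
  obtain ⟨χ, hχ⟩ := exists_orderOf_apply_eq_prime_pow ((orderOf_injective φ φ_injective h).trans hh)
  exact ⟨φ h χ, hχ ▸ IsPrimitiveRoot.orderOf _⟩

theorem exponent_pi_zmod_dvd (ι : Type*) (m : ℕ) :
    Monoid.exponent (ι → Multiplicative (ZMod m)) ∣ m :=
  Monoid.exponent_dvd_of_forall_pow_eq_one fun g =>
    funext fun i => Multiplicative.toAdd.injective (by simp)

theorem exists_isPrimitiveRoot_cyclotomicField_of_monoidAlgebra_algEquiv {F : Type*} [Field F]
    {ι : Type*} [Finite ι] {q k : ℕ} [Fact q.Prime] [NeZero (q : F)]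
    (e : MonoidAlgebra F (ι → Multiplicative (ZMod q)) ≃ₐ[F]
      MonoidAlgebra F (Multiplicative (ZMod (q ^ k)))) :
    ∃ ζ : CyclotomicField q F, IsPrimitiveRoot ζ (q ^ k) := by
  have : HasEnoughRootsOfUnity (CyclotomicField q F) q :=
    ⟨⟨_, IsCyclotomicExtension.zeta_spec q F _⟩, rootsOfUnity.isCyclic _ _⟩
  have := HasEnoughRootsOfUnity.of_dvd (CyclotomicField q F) (exponent_pi_zmod_dvd ι q)
  refine exists_isPrimitiveRoot_of_monoidAlgebra_embedding e.symm.toRingEquiv.toRingHom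
    e.symm.injective (h := Multiplicative.ofAdd 1) ?_
  rw [orderOf_ofAdd_eq_addOrderOf, ZMod.addOrderOf_one]

section RootsOfUnity

open Polynomial in
theorem finrank_le_totient_of_isCyclotomicExtension (n : ℕ) [NeZero n] (K L : Type*) [Field K]
    [Field L] [Algebra K L] [IsCyclotomicExtension {n} K L] : finrank K L ≤ n.totient := by
  have hζ := IsCyclotomicExtension.zeta_spec n K L
  have minpoly_dvd : minpoly K (IsCyclotomicExtension.zeta n K L) ∣ cyclotomic n K := by
    refine minpoly.dvd _ _ ?_
    rw [← eval_map_algebraMap, map_cyclotomic]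
    exact hζ.isRoot_cyclotomic (NeZero.pos n)
  calc finrank K L = (minpoly K (IsCyclotomicExtension.zeta n K L)).natDegree := by
        rw [(hζ.powerBasis K).finrank, IsPrimitiveRoot.powerBasis_dim]
    _ ≤ (cyclotomic n K).natDegree := natDegree_le_of_dvd minpoly_dvd (cyclotomic_ne_zero n K)
    _ = n.totient := natDegree_cyclotomic n K

theorem finrank_cyclotomicField_le (P F : Type*) [Field P] [Field F] [Algebra P F] (n : ℕ)
    [NeZero (n : F)] : finrank P (CyclotomicField n F) ≤ finrank P F * n.totient := by
  have : NeZero n := .of_neZero_natCast F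
  rw [← finrank_mul_finrank P F (CyclotomicField n F)]
  exact Nat.mul_le_mul_left _ (finrank_le_totient_of_isCyclotomicExtension n F _)

theorem totient_le_finrank_of_isPrimitiveRoot {L : Type*} [Field L] [NumberField L] {ζ : L} {m : ℕ}
    (hm : 0 < m) (hζ : IsPrimitiveRoot ζ m) : m.totient ≤ finrank ℚ L := by
  simpa only [Nat.lcm_self] using hζ.lcm_totient_le_finrank hζ
    (by simpa only [Nat.lcm_self] using Polynomial.cyclotomic.irreducible_rat hm)

universe u v

theorem exists_forall_not_isPrimitiveRoot_of_numberField (P : Type u) [Field P] [NumberField P]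
    {q : ℕ} (hq : q.Prime) (N : ℕ) :
    ∃ k, 0 < k ∧ ∀ (L : Type v) [Field L] [Algebra P L] [FiniteDimensional P L],
      finrank P L ≤ N → ∀ ζ : L, ¬ IsPrimitiveRoot ζ (q ^ k) := by
  refine ⟨finrank ℚ P * N + 1, Nat.succ_pos _, fun L _ _ _ hL ζ hζ => ?_⟩
  have := NumberField.of_module_finite P L
  have lt_self : finrank ℚ P * N < finrank ℚ P * N :=
    calc finrank ℚ P * N < q ^ (finrank ℚ P * N) := Nat.lt_pow_self hq.one_lt
      _ ≤ q ^ (finrank ℚ P * N) * (q - 1) := Nat.le_mul_of_pos_right _ (Nat.sub_pos_of_lt hq.one_lt)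
      _ = (q ^ (finrank ℚ P * N + 1)).totient := (Nat.totient_prime_pow_succ hq _).symm
      _ ≤ finrank ℚ L := totient_le_finrank_of_isPrimitiveRoot (pow_pos hq.pos _) hζ
      _ = finrank ℚ P * finrank P L := (finrank_mul_finrank ℚ P L).symm
      _ ≤ finrank ℚ P * N := Nat.mul_le_mul_left _ hL
  exact lt_irrefl _ lt_self

theorem exists_forall_not_isPrimitiveRoot_of_finite (P : Type u) [Field P] [Finite P]
    {q : ℕ} (hq : 1 < q) (N : ℕ) :
    ∃ k, 0 < k ∧ ∀ (L : Type v) [Field L] [Algebra P L] [FiniteDimensional P L],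
      finrank P L ≤ N → ∀ ζ : L, ¬ IsPrimitiveRoot ζ (q ^ k) := by
  refine ⟨Nat.card P ^ N, pow_pos Nat.card_pos _, fun L _ _ _ hL ζ hζ => ?_⟩
  have : Finite L := Module.finite_of_finite P
  have lt_self : Nat.card P ^ N < Nat.card P ^ N :=
    calc Nat.card P ^ N < q ^ Nat.card P ^ N := Nat.lt_pow_self hq
      _ = orderOf ζ := hζ.eq_orderOf
      _ ≤ Nat.card L := orderOf_le_card
      _ = Nat.card P ^ finrank P L := natCard_eq_pow_finrank
      _ ≤ Nat.card P ^ N := Nat.pow_le_pow_right Nat.card_pos hL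
  exact lt_irrefl _ lt_self

end RootsOfUnity

theorem numberField_or_finite_of_bot_eq_top {P : Type*} [Field P] (hP : (⊥ : Subfield P) = ⊤) :
    NumberField P ∨ Finite P := by
  rcases CharP.exists' P with _ | ⟨p, _, _⟩
  · rw [Subfield.bot_eq_of_charZero, RingHom.fieldRange_eq_top_iff] at hP
    have : FiniteDimensional ℚ P := .of_surjective (Algebra.linearMap ℚ P) hP
    exact .inl {}
  · let := ZMod.algebra P p
    rw [Subfield.bot_eq_of_zMod_algebra p, RingHom.fieldRange_eq_top_iff] at hP
    exact .inr (.of_surjective _ hP)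

theorem countable_of_numberField_or_finite {P : Type*} [Field P] (hP : NumberField P ∨ Finite P) :
    Countable P :=
  hP.elim (fun _ => Finsupp.Countable.of_moduleFinite (R := ℚ)) (fun _ => inferInstance)

universe u v w in
theorem exists_prime_power_cyclic_group_algebras_distinguishing_small_extensions_general
    (P : Type u) [Field P] (hP : NumberField P ∨ Finite P) (n : ℕ) {q : ℕ} (hq : q.Prime)
    (hqP : q ≠ ringChar P) :
    ∃ k : ℕ, 0 < k ∧
      (∀ (F : Type v) [Field F] [Algebra P F] [FiniteDimensional P F],
        Module.finrank P F ≤ n →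
        IsEmpty (MonoidAlgebra F (Fin k → Multiplicative (ZMod q)) ≃ₐ[F]
          MonoidAlgebra F (Multiplicative (ZMod (q ^ k))))) ∧
      (∃ (E : Type w) (_ : Field E) (_ : Algebra P E),
        Nonempty (MonoidAlgebra E (Fin k → Multiplicative (ZMod q)) ≃ₐ[E]
          MonoidAlgebra E (Multiplicative (ZMod (q ^ k))))) := by
  have : Fact q.Prime := ⟨hq⟩
  have := countable_of_numberField_or_finite hP
  have : Small.{w} P := Countable.toSmall P
  have q_ne_zero : (q : P) ≠ 0 := fun h => hqP (CharP.ringChar_of_prime_eq_zero hq h).symm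
  obtain ⟨k, k_pos, no_primitive_root⟩ := hP.elim
    (fun _ => exists_forall_not_isPrimitiveRoot_of_numberField P hq (n * q.totient))
    (fun _ => exists_forall_not_isPrimitiveRoot_of_finite P hq.one_lt (n * q.totient))
  refine ⟨k, k_pos, fun F _ _ _ hF => ⟨fun e => ?_⟩, ?_⟩
  · have : NeZero (q : F) :=
      ⟨by simpa only [map_natCast] using (map_ne_zero (algebraMap P F)).2 q_ne_zero⟩
    have : FiniteDimensional F (CyclotomicField q F) :=
      IsCyclotomicExtension.finiteDimensional {q} F _
    have : FiniteDimensional P (CyclotomicField q F) := Module.Finite.trans F _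
    obtain ⟨ζ, hζ⟩ := exists_isPrimitiveRoot_cyclotomicField_of_monoidAlgebra_algEquiv e
    exact no_primitive_root _
      ((finrank_cyclotomicField_le P F q).trans (Nat.mul_le_mul_right _ hF)) ζ hζ
  · exact exists_extension_monoidAlgebra_algEquiv P _ _ (by simp) (by simp [q_ne_zero])

/-- **Example.** For every prime field `P` (a field with no proper subfields) and every
positive integer `n`, there are a prime `q` different from the characteristic of `P` and a
positive integer `k` such that `F[(C_q)^k] ≇ F[C_{q^k}]` for every field extension `F` of `P`
of degree at most `n`, while `E[(C_q)^k] ≅ E[C_{q^k}]` for some field extension `E` of `P`. -/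
theorem exists_prime_power_cyclic_group_algebras_distinguishing_small_extensions
    (P : Type*) [Field P] (hP : ∀ s : Subfield P, s = ⊤) (n : ℕ) (hn : 0 < n) :
    ∃ q k : ℕ, q.Prime ∧ q ≠ ringChar P ∧ 0 < k ∧
      (∀ (F : Type*) [Field F] [Algebra P F] [FiniteDimensional P F],
        Module.finrank P F ≤ n →
        IsEmpty (MonoidAlgebra F (Fin k → Multiplicative (ZMod q)) ≃ₐ[F]
          MonoidAlgebra F (Multiplicative (ZMod (q ^ k))))) ∧
      (∃ (E : Type*) (_ : Field E) (_ : Algebra P E),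
        Nonempty (MonoidAlgebra E (Fin k → Multiplicative (ZMod q)) ≃ₐ[E]
          MonoidAlgebra E (Multiplicative (ZMod (q ^ k))))) := by
  obtain ⟨q, hlt, hq⟩ := Nat.exists_infinite_primes (ringChar P + 1)
  have hqP : q ≠ ringChar P := (Nat.lt_of_succ_le hlt).ne'
  obtain ⟨k, hk⟩ :=
    exists_prime_power_cyclic_group_algebras_distinguishing_small_extensions_general P
      (numberField_or_finite_of_bot_eq_top (hP ⊥)) n hq hqP
  exact ⟨q, k, hq, hqP, hk⟩
end

section
/- Let k be a positive integer and let F be a field of characteristic 0 that is a finite extension of ℚ with [F : ℚ] < 2^{k-1}. Then the group algebras F[(C₂)^k] and F[C_{2^k}] are not isomorphic as F-algebras. -/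
/-!
If `G` has exponent dividing `m` and `F` contains a primitive `m`-th root of unity, then every
`F`-algebra homomorphism from `F[G]` to an extension field `K` sends the elements of `G` to `m`-th
roots of unity, so it takes all its values in `F`. On the other hand, the dual of a finite abelian
group `H` of exponent `n` is isomorphic to `H`, so `H` has a character of order `n`; its image is
cyclic, hence generated by a primitive `n`-th root of unity. Composing it with a surjection
`F[G] → F[H]` shows that `F` already contains a primitive `n`-th root of unity, whence
`φ(n) ≤ [F : ℚ]`. For `G = (C₂)^k` one takes `m = 2` and the root of unity `-1`, and
`φ(2^k) = 2^(k-1)`.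
-/

section Characters

variable {R K G H : Type*} [CommRing R] [CommRing K] [IsDomain K] [Algebra R K] {m : ℕ} {ξ : R}

theorem mem_bot_of_pow_eq_one_of_isPrimitiveRoot [FaithfulSMul R K] [NeZero m]
    (hξ : IsPrimitiveRoot ξ m) {a : K} (ha : a ^ m = 1) : a ∈ (⊥ : Subalgebra R K) := by
  obtain ⟨i, -, rfl⟩ := (hξ.map_of_injective
    (FaithfulSMul.algebraMap_injective R K)).eq_pow_of_pow_eq_one ha
  exact pow_mem (algebraMap_mem _ ξ) i

theorem range_algHom_monoidAlgebra_eq_bot [FaithfulSMul R K] [Monoid G] [NeZero m]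
    (hξ : IsPrimitiveRoot ξ m) (hG : ∀ g : G, g ^ m = 1) (φ : MonoidAlgebra R G →ₐ[R] K) :
    φ.range = ⊥ := by
  suffices ∀ x, φ x ∈ (⊥ : Subalgebra R K) from eq_bot_iff.mpr fun _ ⟨x, hx⟩ ↦ hx ▸ this x
  intro x
  induction x using MonoidAlgebra.induction_on with
  | of g =>
    refine mem_bot_of_pow_eq_one_of_isPrimitiveRoot hξ ?_
    rw [← map_pow, ← map_pow, hG, map_one, map_one]
  | add x y hx hy => rw [map_add]; exact add_mem hx hy
  | smul r x hx => exact (map_smul φ r x) ▸ Subalgebra.smul_mem _ hx r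

variable (K H) in
theorem exists_isPrimitiveRoot_character_exponent [CommGroup H] [Finite H]
    [HasEnoughRootsOfUnity K (Monoid.exponent H)] :
    ∃ (χ : H →* Kˣ) (h : H), IsPrimitiveRoot (χ h) (Monoid.exponent H) := by
  obtain ⟨e⟩ := CommGroup.monoidHom_mulEquiv_of_hasEnoughRootsOfUnity H K
  obtain ⟨g, hg⟩ := Monoid.exists_orderOf_eq_exponent (G := H) Monoid.ExponentExists.of_finite
  let χ : H →* Kˣ := e.symm g
  have orderOf_χ : orderOf χ = Monoid.exponent H := by rw [← hg]; exact e.symm.orderOf_eq g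
  have : Finite χ.range := Set.finite_range χ
  obtain ⟨⟨_, h, rfl⟩, generates⟩ := IsCyclic.exists_generator (α := χ.range)
  have χ_pow_orderOf : χ ^ orderOf (χ h) = 1 := by
    ext x : 1
    obtain ⟨i, hi⟩ := generates ⟨χ x, x, rfl⟩
    have hx : χ h ^ i = χ x := congrArg Subtype.val hi
    rw [MonoidHom.pow_apply, ← hx, ← zpow_natCast, zpow_comm, zpow_natCast, pow_orderOf_eq_one,
      one_zpow, MonoidHom.one_apply]
  have orderOf_χh : orderOf (χ h) = Monoid.exponent H :=
    Nat.dvd_antisymm ((orderOf_map_dvd χ h).trans (Monoid.order_dvd_exponent h))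
      (orderOf_χ ▸ orderOf_dvd_of_pow_eq_one χ_pow_orderOf)
  exact ⟨χ, h, orderOf_χh ▸ IsPrimitiveRoot.orderOf (χ h)⟩

end Characters

section Field

variable {F G H : Type*} [Field F] [Monoid G] [CommGroup H] [Finite H] {m : ℕ} [NeZero m] {ξ : F}

theorem exists_isPrimitiveRoot_exponent_of_surjective [NeZero (Monoid.exponent H : F)]
    (hξ : IsPrimitiveRoot ξ m) (hG : ∀ g : G, g ^ m = 1)
    {f : MonoidAlgebra F G →ₐ[F] MonoidAlgebra F H} (hf : Function.Surjective f) :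
    ∃ ζ : F, IsPrimitiveRoot ζ (Monoid.exponent H) := by
  let K := AlgebraicClosure F
  obtain ⟨χ, h, hχ⟩ := exists_isPrimitiveRoot_character_exponent K H
  let φ : MonoidAlgebra F H →ₐ[F] K := MonoidAlgebra.lift F K H ((Units.coeHom K).comp χ)
  obtain ⟨x, hx⟩ := hf (MonoidAlgebra.of F H h)
  have φfx : φ (f x) = χ h := by simp [hx, φ]
  have χh_mem : (χ h : K) ∈ (⊥ : Subalgebra F K) := by
    rw [← range_algHom_monoidAlgebra_eq_bot hξ hG (φ.comp f)]
    exact ⟨x, φfx⟩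
  obtain ⟨ζ, hζ⟩ := Algebra.mem_bot.mp χh_mem
  have χh_primitive : IsPrimitiveRoot (algebraMap F K ζ) (Monoid.exponent H) :=
    hζ ▸ IsPrimitiveRoot.coe_units_iff.mpr hχ
  exact ⟨ζ, χh_primitive.of_map_of_injective (algebraMap F K).injective⟩

theorem totient_le_finrank_rat_of_isPrimitiveRoot [CharZero F] [FiniteDimensional ℚ F] {n : ℕ}
    [NeZero n] {ζ : F} (hζ : IsPrimitiveRoot ζ n) : n.totient ≤ Module.finrank ℚ F := by
  simpa using hζ.lcm_totient_le_finrank hζ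
    (Polynomial.cyclotomic.irreducible_rat (by simpa using NeZero.pos n))

theorem monoidAlgebra_elementary_abelian_two_ne_cyclic_of_small_degree_general
    [CharZero F] [FiniteDimensional ℚ F] (hξ : IsPrimitiveRoot ξ m) (hG : ∀ g : G, g ^ m = 1)
    (hdeg : Module.finrank ℚ F < (Monoid.exponent H).totient)
    (f : MonoidAlgebra F G →ₐ[F] MonoidAlgebra F H) : ¬ Function.Surjective f := by
  intro hf
  obtain ⟨ζ, hζ⟩ := exists_isPrimitiveRoot_exponent_of_surjective hξ hG hf
  exact hdeg.not_ge (totient_le_finrank_rat_of_isPrimitiveRoot hζ)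

end Field

theorem pi_multiplicative_zmod_pow_eq_one {ι : Type*} {n : ℕ} (g : ι → Multiplicative (ZMod n)) :
    g ^ n = 1 := by
  ext i
  simp [toAdd_pow]

/-- Let `k ≥ 1` and let `F` be a field of characteristic `0` which is a finite extension of
`ℚ` with `[F : ℚ] < 2^(k-1)`. Then `F[(C₂)^k] ≇ F[C_{2^k}]` as `F`-algebras. -/
theorem monoidAlgebra_elementary_abelian_two_ne_cyclic_of_small_degree
    (k : ℕ) (hk : 0 < k) (F : Type*) [Field F] [CharZero F] [FiniteDimensional ℚ F]
    (hdeg : Module.finrank ℚ F < 2 ^ (k - 1)) :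
    IsEmpty (MonoidAlgebra F (Fin k → Multiplicative (ZMod 2)) ≃ₐ[F]
      MonoidAlgebra F (Multiplicative (ZMod (2 ^ k)))) := by
  have hdeg' : Module.finrank ℚ F < (Monoid.exponent (Multiplicative (ZMod (2 ^ k)))).totient := by
    simpa [Monoid.exponent_multiplicative, ZMod.exponent, Nat.totient_prime_pow Nat.prime_two hk]
      using hdeg
  exact ⟨fun e ↦ monoidAlgebra_elementary_abelian_two_ne_cyclic_of_small_degree_general
    (IsPrimitiveRoot.neg_one 0 two_ne_zero.symm) pi_multiplicative_zmod_pow_eq_one hdeg'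
    e.toAlgHom e.surjective⟩
end

section
/- Let p be an odd prime, let q be a prime divisor of p − 1, let k be a positive integer, and let F be a finite field of characteristic p with [F : 𝔽_p] = t. If t < ord_{q^k}(p), the multiplicative order of p modulo q^k, then the group algebras F[(C_q)^k] and F[C_{q^k}] are not isomorphic as F-algebras. -/
/-!
Let `F` be a finite field with `Q` elements. Raising to the power `Q` is an `F`-algebra
endomorphism of the commutative algebra `F[G]`, so it is the identity as soon as it fixes the group
elements, i.e. as soon as the exponent of `G` divides `Q - 1`. The identity `x ^ Q = x` only
involves multiplication, so it is carried along any multiplicative isomorphism `F[G] ≃* R[H]`, and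
restricting it to the elements of `H` shows that the exponent of `H` divides `Q - 1` too. For
`Q = p ^ t` this makes the order of `p` modulo the exponent of `H` a divisor of `t`.
-/

section Exponent

theorem exponent_dvd_sub_one_iff_forall_pow_eq_self {M : Type*} [LeftCancelMonoid M] {n : ℕ}
    (hn : n ≠ 0) : Monoid.exponent M ∣ n - 1 ↔ ∀ g : M, g ^ n = g := by
  refine Monoid.exponent_dvd_iff_forall_pow_eq_one.trans (forall_congr' fun g ↦ ?_)
  rw [← mul_pow_sub_one hn g, mul_eq_left]

theorem exponent_multiplicative_zmod (n : ℕ) : Monoid.exponent (Multiplicative (ZMod n)) = n := by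
  rw [IsCyclic.exponent_eq_card, Nat.card_congr Multiplicative.toAdd, Nat.card_zmod]

theorem exponent_pi_multiplicative_zmod_dvd (ι : Type*) (n : ℕ) :
    Monoid.exponent (ι → Multiplicative (ZMod n)) ∣ n :=
  Monoid.exponent_dvd_of_forall_pow_eq_one fun g ↦ funext fun i ↦
    Monoid.exponent_dvd_iff_forall_pow_eq_one.1 (exponent_multiplicative_zmod n).dvd (g i)

end Exponent

theorem orderOf_natCast_zmod_dvd_iff {a : ℕ} (ha : 0 < a) (n t : ℕ) :
    orderOf (a : ZMod n) ∣ t ↔ n ∣ a ^ t - 1 := by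
  rw [orderOf_dvd_iff_pow_eq_one, eq_comm, ← Nat.modEq_iff_dvd' (Nat.one_le_pow t a ha),
    ← ZMod.natCast_eq_natCast_iff, Nat.cast_one, Nat.cast_pow]

theorem char_sub_one_dvd_natCard_sub_one (R : Type*) [Ring R] [Finite R] (p : ℕ)
    [Fact p.Prime] [CharP R p] : p - 1 ∣ Nat.card R - 1 := by
  let := ZMod.algebra R p
  rw [Module.natCard_eq_pow_finrank (K := ZMod p) (V := R), Nat.card_zmod]
  exact Nat.sub_one_dvd_pow_sub_one _ _

section MonoidAlgebra

open MonoidAlgebra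

theorem monoidAlgebra_pow_natCard_eq_self {F G : Type*} [Field F] [Finite F] [CommMonoid G]
    (hG : ∀ g : G, g ^ Nat.card F = g) (x : MonoidAlgebra F G) : x ^ Nat.card F = x := by
  have := Fintype.ofFinite F
  rw [Nat.card_eq_fintype_card] at hG ⊢
  have frobenius_eq_id :
      FiniteField.frobeniusAlgHom F (MonoidAlgebra F G) = AlgHom.id F (MonoidAlgebra F G) :=
    algHom_ext (fun g ↦ by simp [single_pow, hG]) (Subsingleton.elim _ _)
  exact DFunLike.congr_fun frobenius_eq_id x

theorem pow_eq_self_of_monoidAlgebra {R H : Type*} [Semiring R] [Nontrivial R] [Monoid H] {n : ℕ}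
    (hpow : ∀ x : MonoidAlgebra R H, x ^ n = x) (h : H) : h ^ n = h :=
  of_injective (R := R) <| by rw [map_pow, hpow]

theorem exponent_dvd_natCard_sub_one_of_monoidAlgebra_mulEquiv {F R G H : Type*} [Field F]
    [Finite F] [Semiring R] [Nontrivial R] [CancelCommMonoid G] [LeftCancelMonoid H]
    (e : MonoidAlgebra F G ≃* MonoidAlgebra R H) (hG : Monoid.exponent G ∣ Nat.card F - 1) :
    Monoid.exponent H ∣ Nat.card F - 1 := by
  rw [exponent_dvd_sub_one_iff_forall_pow_eq_self Nat.card_pos.ne'] at hG ⊢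
  refine pow_eq_self_of_monoidAlgebra (R := R) fun y ↦ e.symm.injective ?_
  rw [map_pow, monoidAlgebra_pow_natCard_eq_self hG]

end MonoidAlgebra

theorem monoidAlgebra_not_equiv_of_degree_lt_order_general (K : Type*) {F R G H : Type*} [Field K]
    [Field F] [Finite F] [Algebra K F] [Semiring R] [Nontrivial R] [CancelCommMonoid G]
    [LeftCancelMonoid H] (hG : Monoid.exponent G ∣ Nat.card F - 1)
    (hlt : Module.finrank K F < orderOf (Nat.card K : ZMod (Monoid.exponent H))) :
    IsEmpty (MonoidAlgebra F G ≃* MonoidAlgebra R H) := by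
  refine ⟨fun e ↦ hlt.not_ge (Nat.le_of_dvd Module.finrank_pos ?_)⟩
  have : Finite K := Finite.of_injective _ (algebraMap K F).injective
  rw [orderOf_natCast_zmod_dvd_iff Nat.card_pos, ← Module.natCard_eq_pow_finrank]
  exact exponent_dvd_natCard_sub_one_of_monoidAlgebra_mulEquiv e hG

/-- Let `p` be an odd prime, `q` a prime divisor of `p - 1`, `k ≥ 1`, and `F` a finite field
of characteristic `p` with `[F : 𝔽_p] = t`. If `t` is smaller than the multiplicative order
of `p` modulo `q^k`, then `F[(C_q)^k] ≇ F[C_{q^k}]` as `F`-algebras. -/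
theorem monoidAlgebra_not_equiv_of_degree_lt_order
    (p : ℕ) (hp : p.Prime) (hodd : Odd p) (q : ℕ) (hq : q.Prime) (hdvd : q ∣ p - 1)
    (k : ℕ) (hk : 0 < k) (F : Type*) [Field F] [Finite F] [CharP F p] (t : ℕ)
    (ht : letI := ZMod.algebra F p; Module.finrank (ZMod p) F = t)
    (hlt : t < orderOf ((p : ZMod (q ^ k)))) :
    IsEmpty (MonoidAlgebra F (Fin k → Multiplicative (ZMod q)) ≃ₐ[F]
      MonoidAlgebra F (Multiplicative (ZMod (q ^ k)))) := by
  have : Fact p.Prime := ⟨hp⟩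
  let := ZMod.algebra F p
  have not_mulEquiv := monoidAlgebra_not_equiv_of_degree_lt_order_general (ZMod p) (R := F)
    (((exponent_pi_multiplicative_zmod_dvd (Fin k) q).trans hdvd).trans
      (char_sub_one_dvd_natCard_sub_one F p))
    (by rwa [exponent_multiplicative_zmod (q ^ k), Nat.card_zmod, ht])
  exact ⟨fun e ↦ not_mulEquiv.false e.toMulEquiv⟩
end

section
/- Let p be an odd prime, let q be a prime different from p, let k be a positive integer, and let F be a finite field of characteristic p with [F : 𝔽_p] = t. If p^t ≡ 1 (mod q^k), then the group algebras F[(C_q)^k] and F[C_{q^k}] are isomorphic as F-algebras, both being isomorphic to the product algebra F^{q^k}. -/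
/-!
Distinct algebra homomorphisms to a field are linearly independent, so an `n`-dimensional
`K`-algebra with `n` homomorphisms to `K` is `K^n`. If `F` contains a primitive root of unity of
order `n`, an abelian group `G` of order `n` has exactly `n` characters with values in `Fˣ`, and
evaluation at these characters splits `F[G]` as `F^n`, whatever the structure of `G`. When `F` is
finite, `Fˣ` is cyclic, so the primitive root exists as soon as `n` divides `|F| - 1`.
-/

section AlgHom

variable {ι K A : Type*} [Finite ι] [Field K]

theorem algHom_pi_surjective [Semiring A] [Algebra K A] {φ : ι → A →ₐ[K] K}
    (hφ : Function.Injective φ) : Function.Surjective (AlgHom.pi φ) := by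
  have hli : LinearIndependent K fun i ↦ (φ i : A → K) :=
    (linearIndependent_monoidHom A K).comp (fun i ↦ (φ i : A →* K))
      fun _ _ h ↦ hφ (AlgHom.ext fun a ↦ DFunLike.congr_fun h a)
  have hspan : Submodule.span K (Set.range (AlgHom.pi φ)) = ⊤ :=
    span_flip_eq_top_iff_linearIndependent.mpr hli
  have hrange : Submodule.span K (Set.range (AlgHom.pi φ)) = (AlgHom.pi φ).toLinearMap.range :=
    Submodule.span_eq (AlgHom.pi φ).toLinearMap.range
  exact LinearMap.range_eq_top.mp (hrange.symm.trans hspan)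

theorem algHom_pi_bijective [Ring A] [Algebra K A] [Module.Finite K A]
    {φ : ι → A →ₐ[K] K} (hφ : Function.Injective φ) (hcard : Nat.card ι = Module.finrank K A) :
    Function.Bijective (AlgHom.pi φ) := by
  have := Fintype.ofFinite ι
  have hdim : Module.finrank K A = Module.finrank K (ι → K) := by
    rw [Module.finrank_fintype_fun_eq_card, ← hcard, Nat.card_eq_fintype_card]
  have hsurj := algHom_pi_surjective hφ
  exact ⟨(LinearMap.injective_iff_surjective_of_finrank_eq_finrank
    (f := (AlgHom.pi φ).toLinearMap) hdim).mpr hsurj, hsurj⟩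

end AlgHom

section Characters

/-- Evaluation of elements of the group algebra `F[G]` at the characters `G →* Fˣ`, i.e. the
Fourier transform on `G` with values in `F`. -/
noncomputable def characterEval (F G : Type*) [CommSemiring F] [Monoid G] :
    MonoidAlgebra F G →ₐ[F] ((G →* Fˣ) → F) :=
  AlgHom.pi fun χ ↦ MonoidAlgebra.lift F F G ((Units.coeHom F).comp χ)

variable (F G : Type*) [Field F] [CommGroup G]

theorem characterEval_bijective [Finite G] [HasEnoughRootsOfUnity F (Monoid.exponent G)] :
    Function.Bijective (characterEval F G) := by
  have := Module.Finite.of_basis (MonoidAlgebra.basis G F)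
  refine algHom_pi_bijective (fun χ ψ h ↦ ?_) ?_
  · have hcoe := (MonoidAlgebra.lift F F G).injective h
    exact MonoidHom.ext fun g ↦ Units.ext (DFunLike.congr_fun hcoe g)
  · rw [CommGroup.card_monoidHom_of_hasEnoughRootsOfUnity,
      Module.finrank_eq_nat_card_basis (MonoidAlgebra.basis G F)]

variable {F G}

theorem nonempty_monoidAlgebra_algEquiv_fun {n : ℕ} [NeZero n] (hG : Nat.card G = n) {ζ : F}
    (hζ : IsPrimitiveRoot ζ n) : Nonempty (MonoidAlgebra F G ≃ₐ[F] (Fin n → F)) := by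
  have : Finite G := Nat.finite_of_card_ne_zero (hG ▸ NeZero.ne n)
  have : HasEnoughRootsOfUnity F n := ⟨⟨ζ, hζ⟩, inferInstance⟩
  have : HasEnoughRootsOfUnity F (Monoid.exponent G) :=
    .of_dvd F (hG ▸ Group.exponent_dvd_nat_card)
  have hchar : Nat.card (G →* Fˣ) = n :=
    (CommGroup.card_monoidHom_of_hasEnoughRootsOfUnity G F).trans hG
  exact ⟨(AlgEquiv.ofBijective _ (characterEval_bijective F G)).trans
    (AlgEquiv.piCongrLeft' F (fun _ ↦ F) (Finite.equivFinOfCardEq hchar))⟩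

end Characters

section PrimitiveRoots

theorem exists_isPrimitiveRoot_of_dvd_natCard_units {R : Type*} [CommRing R] [IsDomain R]
    [Finite Rˣ] {n : ℕ} (hn : n ∣ Nat.card Rˣ) : ∃ ζ : R, IsPrimitiveRoot ζ n := by
  obtain ⟨g, hg⟩ := IsCyclic.exists_ofOrder_eq_natCard (α := Rˣ)
  obtain ⟨m, hm⟩ := hn
  have hprim : IsPrimitiveRoot (g : R) (Nat.card Rˣ) :=
    IsPrimitiveRoot.coe_units_iff.mpr (hg ▸ .orderOf g)
  exact ⟨_, hprim.pow Nat.card_pos (hm.trans (mul_comm n m))⟩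

theorem exists_isPrimitiveRoot_of_pow_finrank_modEq_one {F : Type*} [Field F] [Finite F]
    {p n : ℕ} (hp : p.Prime) [Algebra (ZMod p) F]
    (h : p ^ Module.finrank (ZMod p) F ≡ 1 [MOD n]) : ∃ ζ : F, IsPrimitiveRoot ζ n := by
  have : Fact p.Prime := ⟨hp⟩
  have hF : Nat.card F = p ^ Module.finrank (ZMod p) F := by
    rw [Module.natCard_eq_pow_finrank (K := ZMod p) (V := F), Nat.card_zmod]
  apply exists_isPrimitiveRoot_of_dvd_natCard_units
  rw [Nat.card_units, hF]
  exact (Nat.modEq_iff_dvd' (Nat.one_le_pow _ _ hp.pos)).mp h.symm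

end PrimitiveRoots

theorem monoidAlgebra_equiv_of_pow_congr_one_general {F : Type*} [Field F] {q k : ℕ} (hq : q ≠ 0)
    {ζ : F} (hζ : IsPrimitiveRoot ζ (q ^ k)) :
    Nonempty (MonoidAlgebra F (Fin k → Multiplicative (ZMod q)) ≃ₐ[F]
      MonoidAlgebra F (Multiplicative (ZMod (q ^ k)))) ∧
    Nonempty (MonoidAlgebra F (Fin k → Multiplicative (ZMod q)) ≃ₐ[F] (Fin (q ^ k) → F)) ∧
    Nonempty (MonoidAlgebra F (Multiplicative (ZMod (q ^ k))) ≃ₐ[F] (Fin (q ^ k) → F)) := by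
  have : NeZero q := ⟨hq⟩
  obtain ⟨prodEquiv⟩ := nonempty_monoidAlgebra_algEquiv_fun
    (G := Fin k → Multiplicative (ZMod q)) (by simp) hζ
  obtain ⟨cyclicEquiv⟩ := nonempty_monoidAlgebra_algEquiv_fun
    (G := Multiplicative (ZMod (q ^ k))) (by simp) hζ
  exact ⟨⟨prodEquiv.trans cyclicEquiv.symm⟩, ⟨prodEquiv⟩, ⟨cyclicEquiv⟩⟩

/-- Let `p` be an odd prime, `q` a prime different from `p`, `k ≥ 1`, and `F` a finite field
of characteristic `p` with `[F : 𝔽_p] = t`. If `p^t ≡ 1 (mod q^k)`, then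
`F[(C_q)^k] ≅ F[C_{q^k}]` as `F`-algebras, both being isomorphic to `F^{q^k}`. -/
theorem monoidAlgebra_equiv_of_pow_congr_one
    (p : ℕ) (hp : p.Prime) (hodd : Odd p) (q : ℕ) (hq : q.Prime) (hne : q ≠ p)
    (k : ℕ) (hk : 0 < k) (F : Type*) [Field F] [Finite F] [CharP F p] (t : ℕ)
    (ht : letI := ZMod.algebra F p; Module.finrank (ZMod p) F = t)
    (hcong : p ^ t ≡ 1 [MOD q ^ k]) :
    Nonempty (MonoidAlgebra F (Fin k → Multiplicative (ZMod q)) ≃ₐ[F]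
      MonoidAlgebra F (Multiplicative (ZMod (q ^ k)))) ∧
    Nonempty (MonoidAlgebra F (Fin k → Multiplicative (ZMod q)) ≃ₐ[F] (Fin (q ^ k) → F)) ∧
    Nonempty (MonoidAlgebra F (Multiplicative (ZMod (q ^ k))) ≃ₐ[F] (Fin (q ^ k) → F)) := by
  obtain ⟨ζ, hζ⟩ := letI := ZMod.algebra F p
    exists_isPrimitiveRoot_of_pow_finrank_modEq_one hp (ht ▸ hcong)
  exact monoidAlgebra_equiv_of_pow_congr_one_general hq.ne_zero hζ
end

section
/- Let k be a positive integer and let F be a finite field of characteristic 2 with [F : 𝔽₂] = t. If t < 3^{k-1}, then the group algebras F[(C₃)^k] and F[C_{3^k}] are not isomorphic as F-algebras. -/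
/-!
Let `q = |F|` and let `G` be a commutative group of exponent dividing `n`. If `q ^ m ≡ 1` modulo
`n`, then the ring endomorphism `x ↦ x ^ q ^ m` of `F[G]` fixes both `F` and `G`, hence is the
identity, so every `x` of finite order in `F[G]` has order dividing `q ^ m - 1`. For `q = 2 ^ t`,
`n = 3` and `m = 2` this bound is `4 ^ t - 1`, whose `3`-adic valuation is one more than that of
`t`. Thus `F[G]` contains an element of order `3 ^ (k + 1)` only if `3 ^ k` divides `t`.
-/

theorem pow_add_dvd_pow_sub_pow_iff {p x y e : ℕ} (hp : p.Prime) (hodd : Odd p) (hx : ¬p ∣ x)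
    (he : e ≠ 0) (hxy : emultiplicity p (x - y) = e) (k n : ℕ) :
    p ^ (k + e) ∣ x ^ n - y ^ n ↔ p ^ k ∣ n := by
  have hdvd : p ∣ x - y := (dvd_pow_self p he).trans (pow_dvd_of_le_emultiplicity hxy.ge)
  rw [pow_dvd_iff_le_emultiplicity, pow_dvd_iff_le_emultiplicity,
    Nat.emultiplicity_pow_sub_pow hp hodd hdvd hx, hxy, Nat.cast_add, add_comm (k : ℕ∞),
    ENat.add_le_add_iff_left (ENat.natCast_ne_top e)]

theorem three_pow_succ_dvd_four_pow_sub_one_iff (k t : ℕ) :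
    3 ^ (k + 1) ∣ 4 ^ t - 1 ↔ 3 ^ k ∣ t := by
  have hthree : emultiplicity 3 (4 - 1) = (1 : ℕ) :=
    (Nat.finiteMultiplicity_iff.mpr (by decide)).emultiplicity_self
  simpa only [one_pow] using
    pow_add_dvd_pow_sub_pow_iff Nat.prime_three (by decide) (by decide) one_ne_zero hthree k t

theorem orderOf_dvd_sub_one_of_pow_eq_self {M : Type*} [Monoid M] {x : M} {n : ℕ}
    (hx : IsOfFinOrder x) (hpow : x ^ n = x) : orderOf x ∣ n - 1 := by
  cases n with
  | zero => exact dvd_zero _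
  | succ n => exact orderOf_dvd_of_pow_eq_one (hx.isUnit.mul_eq_right.mp (by rwa [← pow_succ]))

theorem monoidAlgebra_pow_expChar_pow_eq_self {R G : Type*} [CommSemiring R] [CommMonoid G]
    (p n : ℕ) [ExpChar R p] (hR : ∀ r : R, r ^ p ^ n = r) (hG : ∀ g : G, g ^ p ^ n = g)
    (x : MonoidAlgebra R G) : x ^ p ^ n = x := by
  have : ExpChar (MonoidAlgebra R G) p :=
    expChar_of_injective_ringHom (f := MonoidAlgebra.singleOneRingHom)
      MonoidAlgebra.single_right_injective p
  have hid : iterateFrobenius (MonoidAlgebra R G) p n = RingHom.id _ :=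
    MonoidAlgebra.ringHom_ext
      (fun r ↦ by simp [iterateFrobenius_def, MonoidAlgebra.single_pow, hR])
      (fun g ↦ by simp [iterateFrobenius_def, MonoidAlgebra.single_pow, hG])
  exact RingHom.congr_fun hid x

theorem monoidAlgebra_orderOf_dvd_card_pow_sub_one {F G : Type*} [Field F] [Finite F]
    [CommMonoid G] {m n : ℕ} (hG : ∀ g : G, g ^ n = 1) (hmod : Nat.card F ^ m ≡ 1 [MOD n])
    {x : MonoidAlgebra F G} (hx : IsOfFinOrder x) : orderOf x ∣ Nat.card F ^ m - 1 := by
  have := Fintype.ofFinite F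
  obtain ⟨r, hp, hcard⟩ := FiniteField.card F (ringChar F)
  have : ExpChar F (ringChar F) := .prime hp
  have hq : Nat.card F ^ m = ringChar F ^ (r * m) := by
    rw [Nat.card_eq_fintype_card, hcard, pow_mul]
  refine orderOf_dvd_sub_one_of_pow_eq_self hx ?_
  rw [hq]
  refine monoidAlgebra_pow_expChar_pow_eq_self _ _ (fun a ↦ ?_) (fun g ↦ ?_) x
  · rw [← hq, Nat.card_eq_fintype_card, FiniteField.pow_card_pow]
  · rw [← hq, pow_eq_pow_of_modEq hmod (hG g), pow_one]

theorem three_pow_dvd_finrank_of_orderOf_eq {F G : Type*} [Field F] [Finite F]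
    [Algebra (ZMod 2) F] [CommMonoid G] (hG : ∀ g : G, g ^ 3 = 1) {x : MonoidAlgebra F G} {k : ℕ}
    (hx : orderOf x = 3 ^ (k + 1)) : 3 ^ k ∣ Module.finrank (ZMod 2) F := by
  have hcard : Nat.card F ^ 2 = 4 ^ Module.finrank (ZMod 2) F := by
    rw [Module.natCard_eq_pow_finrank (K := ZMod 2), Nat.card_zmod, pow_right_comm,
      show 2 ^ 2 = 4 from rfl]
  have hmod : Nat.card F ^ 2 ≡ 1 [MOD 3] := by
    rw [hcard]
    simpa only [one_pow] using (show 4 ≡ 1 [MOD 3] by rfl).pow (Module.finrank (ZMod 2) F)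
  have hfin : IsOfFinOrder x := orderOf_pos_iff.mp (hx ▸ by positivity)
  rw [← three_pow_succ_dvd_four_pow_sub_one_iff, ← hx, ← hcard]
  exact monoidAlgebra_orderOf_dvd_card_pow_sub_one hG hmod hfin

theorem monoidAlgebra_orderOf_of_ofAdd_one (R : Type*) [Semiring R] [Nontrivial R] (n : ℕ) :
    orderOf (MonoidAlgebra.of R _ (Multiplicative.ofAdd (1 : ZMod n))) = n := by
  rw [orderOf_injective _ MonoidAlgebra.of_injective, orderOf_ofAdd_eq_addOrderOf,
    ZMod.addOrderOf_one]

theorem monoidAlgebra_not_equiv_char_two_of_small_degree_general {F G R : Type*} [Field F]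
    [Finite F] [Algebra (ZMod 2) F] [CommMonoid G] (hG : ∀ g : G, g ^ 3 = 1) [Semiring R]
    [Nontrivial R] {k : ℕ} (hk : ¬3 ^ k ∣ Module.finrank (ZMod 2) F)
    (f : MonoidAlgebra R (Multiplicative (ZMod (3 ^ (k + 1)))) →+* MonoidAlgebra F G) :
    ¬Function.Injective f := fun hf ↦
  hk (three_pow_dvd_finrank_of_orderOf_eq hG
    ((orderOf_injective (f : _ →* _) hf _).trans (monoidAlgebra_orderOf_of_ofAdd_one R _)))

/-- Let `k ≥ 1` and let `F` be a finite field of characteristic `2` with `[F : 𝔽₂] = t`.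
If `t < 3^(k-1)`, then `F[(C₃)^k] ≇ F[C_{3^k}]` as `F`-algebras. -/
theorem monoidAlgebra_not_equiv_char_two_of_small_degree
    (k : ℕ) (hk : 0 < k) (F : Type*) [Field F] [Finite F] [CharP F 2] (t : ℕ)
    (ht : letI := ZMod.algebra F 2; Module.finrank (ZMod 2) F = t)
    (hlt : t < 3 ^ (k - 1)) :
    IsEmpty (MonoidAlgebra F (Fin k → Multiplicative (ZMod 3)) ≃ₐ[F]
      MonoidAlgebra F (Multiplicative (ZMod (3 ^ k)))) := by
  let := ZMod.algebra F 2
  obtain ⟨k, rfl⟩ := Nat.exists_eq_add_one.mpr hk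
  have hndvd : ¬3 ^ k ∣ Module.finrank (ZMod 2) F :=
    Nat.not_dvd_of_pos_of_lt Module.finrank_pos (ht.trans_lt hlt)
  exact ⟨fun e ↦ monoidAlgebra_not_equiv_char_two_of_small_degree_general
    pi_multiplicative_zmod_pow_eq_one hndvd
    (RingHomClass.toRingHom e.symm) e.symm.injective⟩
end

section
/- Let k be a positive integer and let F be a finite field of characteristic 2 with [F : 𝔽₂] = t. If 2^t ≡ 1 (mod 3^k), then the group algebras F[(C₃)^k] and F[C_{3^k}] are isomorphic as F-algebras, both being isomorphic to the product algebra F^{3^k}. -/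
/-! If the field `F` has enough roots of unity for the finite commutative group `G`, then `G` has
`|G|` characters with values in `F`, and they separate its points. Evaluation thus turns the
elements of `G` into pairwise distinct characters of the dual group `Ĝ`, which are linearly
independent by Dedekind. So the Fourier transform `F[G] → F^Ĝ` is injective, hence bijective for
dimension reasons. A finite field has enough `n`-th roots of unity whenever `n` divides the order
`|F| - 1` of its cyclic unit group. -/

open Module

/-- The Fourier transform of a monoid `M` over `R`: the algebra map sending `m` to the function
`χ ↦ χ m` on the characters of `M`. Characters take values in `Rˣ`, as in Mathlib's duality theory
of finite commutative groups. -/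
noncomputable def fourierTransformAlgHom (R M : Type*) [CommSemiring R] [Monoid M] :
    MonoidAlgebra R M →ₐ[R] ((M →* Rˣ) → R) :=
  AlgHom.pi fun χ ↦ MonoidAlgebra.lift R R M ((Units.coeHom R).comp χ)

theorem fourierTransformAlgHom_single_one {R M : Type*} [CommSemiring R] [Monoid M] (m : M)
    (χ : M →* Rˣ) : fourierTransformAlgHom R M (MonoidAlgebra.single m 1) χ = χ m := by
  simp [fourierTransformAlgHom]

theorem linearIndependent_units_monoidHom (M R : Type*) [MulOneClass M] [CommRing R] [IsDomain R] :
    LinearIndependent R (fun (χ : M →* Rˣ) (m : M) ↦ (χ m : R)) :=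
  (linearIndependent_monoidHom M R).comp (Units.coeHom R).comp fun _ _ h ↦
    MonoidHom.ext fun m ↦ Units.ext (DFunLike.congr_fun h m)

theorem fourierTransformAlgHom_injective {R M : Type*} [CommRing R] [IsDomain R] [Monoid M]
    (hM : Function.Injective (MonoidHom.eval : M →* (M →* Rˣ) →* Rˣ)) :
    Function.Injective (fourierTransformAlgHom R M) := by
  have h_indep : LinearIndependent R fun (m : M) (χ : M →* Rˣ) ↦ (χ m : R) :=
    (linearIndependent_units_monoidHom (M →* Rˣ) R).comp MonoidHom.eval hM
  have h_basis : (fourierTransformAlgHom R M).toLinearMap ∘ MonoidAlgebra.basis M R =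
      fun m χ ↦ (χ m : R) :=
    funext₂ fourierTransformAlgHom_single_one
  exact LinearMap.injective_of_linearIndependent (f := (fourierTransformAlgHom R M).toLinearMap)
    (MonoidAlgebra.basis M R).span_eq (h_basis ▸ h_indep)

section DiagonalGroupAlgebra

variable {F G : Type*} [Field F] [CommGroup G]

theorem fourierTransformAlgHom_bijective [Finite G]
    [HasEnoughRootsOfUnity F (Monoid.exponent G)] :
    Function.Bijective (fourierTransformAlgHom F G) := by
  have h_inj : Function.Injective (fourierTransformAlgHom F G) :=
    fourierTransformAlgHom_injective fun g g' h ↦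
      (CommGroup.forall_apply_eq_apply_iff G).1 (DFunLike.congr_fun h)
  have := Fintype.ofFinite (G →* Fˣ)
  have := (MonoidAlgebra.basis G F).finiteDimensional_of_finite
  have h_finrank : finrank F (MonoidAlgebra F G) = finrank F ((G →* Fˣ) → F) := by
    rw [finrank_eq_nat_card_basis (MonoidAlgebra.basis G F), finrank_pi,
      ← Nat.card_eq_fintype_card, CommGroup.card_monoidHom_of_hasEnoughRootsOfUnity]
  exact ⟨h_inj, (LinearMap.injective_iff_surjective_of_finrank_eq_finrank
    (f := (fourierTransformAlgHom F G).toLinearMap) h_finrank).1 h_inj⟩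

theorem nonempty_monoidAlgebra_algEquiv_fin {n : ℕ} [NeZero n] [HasEnoughRootsOfUnity F n]
    (hG : Nat.card G = n) : Nonempty (MonoidAlgebra F G ≃ₐ[F] (Fin n → F)) := by
  subst hG
  have : Finite G := Nat.finite_of_card_ne_zero (NeZero.ne _)
  have : HasEnoughRootsOfUnity F (Monoid.exponent G) :=
    HasEnoughRootsOfUnity.of_dvd F Group.exponent_dvd_nat_card
  exact ⟨(AlgEquiv.ofBijective _ fourierTransformAlgHom_bijective).trans <|
    AlgEquiv.piCongrLeft F (fun _ ↦ F) <|
      Finite.equivFinOfCardEq (CommGroup.card_monoidHom_of_hasEnoughRootsOfUnity G F)⟩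

end DiagonalGroupAlgebra

theorem hasEnoughRootsOfUnity_of_natCard_modEq_one {F : Type*} [Field F] [Finite F] {n : ℕ}
    (h : Nat.card F ≡ 1 [MOD n]) : HasEnoughRootsOfUnity F n := by
  have h_dvd : n ∣ Nat.card Fˣ := by
    rw [Nat.card_units]
    exact (Nat.modEq_iff_dvd' Nat.card_pos).1 h.symm
  obtain ⟨u, hu⟩ := IsCyclic.exists_ofOrder_eq_natCard (α := Fˣ)
  have : NeZero (Nat.card Fˣ) := ⟨Nat.card_pos.ne'⟩
  have : HasEnoughRootsOfUnity F (Nat.card Fˣ) :=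
    ⟨⟨u, hu ▸ (IsPrimitiveRoot.orderOf u).map_of_injective Units.coeHom_injective⟩, inferInstance⟩
  exact HasEnoughRootsOfUnity.of_dvd F h_dvd

theorem monoidAlgebra_equiv_char_two_of_pow_congr_one_general
    (n k : ℕ) [NeZero n] (F : Type*) [Field F] [HasEnoughRootsOfUnity F (n ^ k)] :
    Nonempty (MonoidAlgebra F (Fin k → Multiplicative (ZMod n)) ≃ₐ[F]
      MonoidAlgebra F (Multiplicative (ZMod (n ^ k)))) ∧
    Nonempty (MonoidAlgebra F (Fin k → Multiplicative (ZMod n)) ≃ₐ[F] (Fin (n ^ k) → F)) ∧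
    Nonempty (MonoidAlgebra F (Multiplicative (ZMod (n ^ k))) ≃ₐ[F] (Fin (n ^ k) → F)) := by
  obtain ⟨e_pow⟩ : Nonempty
      (MonoidAlgebra F (Fin k → Multiplicative (ZMod n)) ≃ₐ[F] (Fin (n ^ k) → F)) :=
    nonempty_monoidAlgebra_algEquiv_fin (by simp)
  obtain ⟨e_cyclic⟩ : Nonempty
      (MonoidAlgebra F (Multiplicative (ZMod (n ^ k))) ≃ₐ[F] (Fin (n ^ k) → F)) :=
    nonempty_monoidAlgebra_algEquiv_fin (by simp)
  exact ⟨⟨e_pow.trans e_cyclic.symm⟩, ⟨e_pow⟩, ⟨e_cyclic⟩⟩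

/-- Let `k ≥ 1` and let `F` be a finite field of characteristic `2` with `[F : 𝔽₂] = t`.
If `2^t ≡ 1 (mod 3^k)`, then `F[(C₃)^k] ≅ F[C_{3^k}]` as `F`-algebras, both being
isomorphic to `F^{3^k}`. -/
theorem monoidAlgebra_equiv_char_two_of_pow_congr_one
    (k : ℕ) (hk : 0 < k) (F : Type*) [Field F] [Finite F] [CharP F 2] (t : ℕ)
    (ht : letI := ZMod.algebra F 2; Module.finrank (ZMod 2) F = t)
    (hcong : 2 ^ t ≡ 1 [MOD 3 ^ k]) :
    Nonempty (MonoidAlgebra F (Fin k → Multiplicative (ZMod 3)) ≃ₐ[F]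
      MonoidAlgebra F (Multiplicative (ZMod (3 ^ k)))) ∧
    Nonempty (MonoidAlgebra F (Fin k → Multiplicative (ZMod 3)) ≃ₐ[F] (Fin (3 ^ k) → F)) ∧
    Nonempty (MonoidAlgebra F (Multiplicative (ZMod (3 ^ k))) ≃ₐ[F] (Fin (3 ^ k) → F)) := by
  rw [← ht, FiniteField.pow_finrank_eq_natCard] at hcong
  have := hasEnoughRootsOfUnity_of_natCard_modEq_one hcong
  exact monoidAlgebra_equiv_char_two_of_pow_congr_one_general 3 k F
end

section
/- Let F be a finite field of characteristic 2 with [F : 𝔽₂] = t. If t is even, then the group algebra F[C₃] is isomorphic as an F-algebra to F³; if t is odd, then F[C₃] is isomorphic as an F-algebra to F × K, where K is a field extension of F of degree 2. -/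
/-!
The group algebra `F[C_ℓ]` is `F[X] / (X ^ ℓ - 1)`. If `F` contains a primitive `ℓ`-th root of
unity, then `X ^ ℓ - 1` has `ℓ` distinct roots in `F`, and evaluating at them gives
`F[C_ℓ] ≃ F ^ ℓ`. For `ℓ` prime and invertible in `F`, the factors of `X ^ ℓ - 1 = (X - 1) Φ_ℓ` are
coprime because `Φ_ℓ(1) = ℓ`, so the Chinese remainder theorem splits off one copy of `F`; the other
factor `F[X] / (Φ_ℓ)` is a field exactly when `|F|` generates `(ℤ/ℓ)ˣ`. If `p` generates `(ℤ/ℓ)ˣ`,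
then `|F| = p ^ t` is `1` modulo `ℓ` when `ℓ - 1 ∣ t`, and a generator when `t` is coprime to
`ℓ - 1`.
-/

section

open Polynomial

universe v

theorem coprime_of_orderOf_natCast_pos {m n : ℕ} (h : 0 < orderOf (m : ZMod n)) : m.Coprime n :=
  (ZMod.isUnit_iff_coprime m n).1 (orderOf_pos_iff.1 h).isUnit

section CommRing

variable (R : Type*) [CommRing R]

theorem root_X_pow_sub_one_pow (n : ℕ) : AdjoinRoot.root (X ^ n - 1 : R[X]) ^ n = 1 := by
  have h := AdjoinRoot.eval₂_root (X ^ n - 1 : R[X])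
  rwa [eval₂_sub, eval₂_X_pow, eval₂_one, sub_eq_zero] at h

theorem monoidAlgebra_of_ofAdd_one_pow (n : ℕ) :
    MonoidAlgebra.of R (Multiplicative (ZMod n)) (.ofAdd 1) ^ n = 1 := by
  rw [← map_pow, ← ofAdd_nsmul, nsmul_one, ZMod.natCast_self, ofAdd_zero, map_one]

/-- The presentation `R[Cₙ] ≃ R[X] / (X ^ n - 1)`, sending the generator `1 : ZMod n` to the class
of `X`. -/
noncomputable def monoidAlgebraZModEquivAdjoinRoot (n : ℕ) [NeZero n] :
    MonoidAlgebra R (Multiplicative (ZMod n)) ≃ₐ[R] AdjoinRoot (X ^ n - 1 : R[X]) :=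
  AlgEquiv.ofAlgHom
    (MonoidAlgebra.lift R _ _ (AddChar.zmodChar n (root_X_pow_sub_one_pow R n)).toMonoidHom)
    (AdjoinRoot.liftAlgHom _ (Algebra.ofId R _) (MonoidAlgebra.of R _ (.ofAdd 1)) (by
      rw [eval₂_sub, eval₂_X_pow, eval₂_one, monoidAlgebra_of_ofAdd_one_pow, sub_self]))
    (AdjoinRoot.algHom_ext (by
      rw [AlgHom.comp_apply, AdjoinRoot.liftAlgHom_root, MonoidAlgebra.lift_of]
      simpa using AddChar.zmodChar_apply' (root_X_pow_sub_one_pow R n) 1))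
    (MonoidAlgebra.algHom_ext (fun k ↦ by
      rw [AlgHom.comp_apply, MonoidAlgebra.lift_single, one_smul, AddChar.toMonoidHom_apply,
        AddChar.zmodChar_apply, map_pow, AdjoinRoot.liftAlgHom_root, ← map_pow, ← ofAdd_nsmul,
        nsmul_one, ZMod.natCast_zmod_val, ofAdd_toAdd, MonoidAlgebra.of_apply, AlgHom.id_apply])
      (Subsingleton.elim _ _))

variable {R}

/-- The Chinese remainder theorem for a product of two coprime polynomials. -/
noncomputable def adjoinRootMulEquivProd {f g : R[X]} (hfg : IsCoprime f g) :
    AdjoinRoot (f * g) ≃ₐ[R] AdjoinRoot f × AdjoinRoot g :=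
  AlgEquiv.ofRingEquiv
    (f := (Ideal.quotEquivOfEq (Ideal.span_singleton_mul_span_singleton f g).symm).trans
      (Ideal.quotientMulEquivQuotientProd _ _ ((Ideal.isCoprime_span_singleton_iff f g).2 hfg)))
    fun _ ↦ rfl

theorem isUnit_natCast_of_coprime_natCard [Finite R] {n : ℕ} (hn : (Nat.card R).Coprime n) :
    IsUnit (n : R) := by
  have := Fintype.ofFinite R
  have h : IsCoprime (Nat.card R : R) (n : R) := hn.cast
  rwa [Nat.card_eq_fintype_card, Nat.cast_card_eq_zero, isCoprime_zero_left] at h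

theorem isCoprime_X_sub_C_of_isUnit_eval {f : R[X]} {a : R} (h : IsUnit (f.eval a)) :
    IsCoprime (X - C a) f := by
  obtain ⟨g, hg⟩ := X_sub_C_dvd_sub_C_eval (p := f) (a := a)
  have hC : IsCoprime (X - C a) (C (f.eval a)) :=
    isCoprime_one_right.of_isCoprime_of_dvd_right (h.map C).dvd
  rw [← sub_add_cancel f (C (f.eval a)), hg]
  exact hC.mul_add_left_right g

theorem nonempty_algEquiv_prod_adjoinRoot_cyclotomic {ℓ : ℕ} [Fact ℓ.Prime]
    (hℓ : IsUnit (ℓ : R)) :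
    Nonempty (MonoidAlgebra R (Multiplicative (ZMod ℓ)) ≃ₐ[R]
      R × AdjoinRoot (cyclotomic ℓ R)) := by
  have factorization : (X ^ ℓ - 1 : R[X]) = (X - C 1) * cyclotomic ℓ R := by
    rw [C_1, mul_comm, cyclotomic_prime_mul_X_sub_one]
  exact ⟨(monoidAlgebraZModEquivAdjoinRoot R ℓ).trans <|
    (AdjoinRoot.algEquivOfEq R _ _ factorization).trans <|
    (adjoinRootMulEquivProd
      (isCoprime_X_sub_C_of_isUnit_eval (by rwa [eval_one_cyclotomic_prime]))).trans <|
    AlgEquiv.prodCongr (quotientSpanXSubCAlgEquiv 1) .refl⟩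

end CommRing

section Field

variable {F : Type*} [Field F]

section Evaluation

variable {ι : Type*} {a : ι → F} (ha : Function.Injective a)
include ha

theorem aeval_pi_surjective_of_injective [Finite ι] : Function.Surjective (aeval (R := F) a) := by
  classical
  have := Fintype.ofFinite ι
  refine fun v ↦ ⟨Lagrange.interpolate Finset.univ a v, funext fun i ↦ ?_⟩
  rw [aeval_pi_apply₂, coe_aeval_eq_eval,
    Lagrange.eval_interpolate_at_node v ha.injOn (Finset.mem_univ i)]

variable [Fintype ι]

theorem ker_aeval_pi_eq_span_prod_X_sub_C :
    RingHom.ker (aeval (R := F) a) = Ideal.span {∏ i, (X - C (a i))} := by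
  ext f
  rw [RingHom.mem_ker, Ideal.mem_span_singleton, aeval_pi_apply, funext_iff]
  simp only [coe_aeval_eq_eval, Pi.zero_apply, ← IsRoot.def, ← dvd_iff_isRoot]
  exact ⟨Fintype.prod_dvd_of_coprime (pairwise_coprime_X_sub_C ha),
    fun h i ↦ (Finset.dvd_prod_of_mem (fun i ↦ X - C (a i)) (Finset.mem_univ i)).trans h⟩

/-- Evaluation at distinct points `a i`, as an isomorphism `F[X] / (∏ i, (X - a i)) ≃ F ^ ι`. -/
noncomputable def adjoinRootProdXSubCEquivPi : AdjoinRoot (∏ i, (X - C (a i))) ≃ₐ[F] (ι → F) :=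
  (Ideal.quotientEquivAlgOfEq F (ker_aeval_pi_eq_span_prod_X_sub_C ha).symm).trans
    (Ideal.quotientKerAlgEquivOfSurjective (aeval_pi_surjective_of_injective ha))

end Evaluation

theorem nonempty_algEquiv_pi_of_isPrimitiveRoot {n : ℕ} [NeZero n] {ζ : F}
    (hζ : IsPrimitiveRoot ζ n) :
    Nonempty (MonoidAlgebra F (Multiplicative (ZMod n)) ≃ₐ[F] (Fin n → F)) := by
  let roots : Fin n ≃ nthRootsFinset n (1 : F) :=
    (Finset.equivFinOfCardEq hζ.card_nthRootsFinset).symm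
  have factorization : (X ^ n - 1 : F[X]) = ∏ i, (X - C (roots i : F)) := by
    rw [X_pow_sub_one_eq_prod (NeZero.pos n) hζ, roots.prod_comp fun x ↦ X - C (x : F),
      Finset.prod_coe_sort _ fun x ↦ X - C x]
  exact ⟨(monoidAlgebraZModEquivAdjoinRoot F n).trans <|
    (AdjoinRoot.algEquivOfEq F _ _ factorization).trans <|
    adjoinRootProdXSubCEquivPi (Subtype.val_injective.comp roots.injective)⟩

variable [Finite F]

theorem exists_isPrimitiveRoot_of_dvd_natCard_sub_one {n : ℕ} (hn : n ∣ Nat.card F - 1) :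
    ∃ ζ : F, IsPrimitiveRoot ζ n := by
  obtain ⟨g, hg⟩ := IsCyclic.exists_ofOrder_eq_natCard (α := Fˣ)
  rw [Nat.card_units] at hg
  obtain ⟨m, hm⟩ := hn
  have hζ : IsPrimitiveRoot (g ^ m) n :=
    (hg ▸ IsPrimitiveRoot.orderOf g).pow (hg ▸ orderOf_pos g) (by rw [hm, mul_comm])
  exact ⟨(g ^ m : Fˣ), IsPrimitiveRoot.coe_units_iff.2 hζ⟩

theorem irreducible_cyclotomic_of_orderOf_natCard {n : ℕ} [NeZero n]
    (hn : orderOf (Nat.card F : ZMod n) = n.totient) : Irreducible (cyclotomic n F) := by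
  have := Fintype.ofFinite F
  obtain ⟨p, -, f, hp, hcard⟩ := FiniteField.card' F
  have : Fact p.Prime := ⟨hp⟩
  rw [Nat.card_eq_fintype_card, hcard] at hn
  have hpn : p.Coprime n := by
    rw [← Nat.coprime_pow_left_iff f.pos]
    exact coprime_of_orderOf_natCast_pos (hn ▸ Nat.totient_pos.2 (NeZero.pos n))
  refine irreducible_of_dvd_cyclotomic_of_natDegree hcard hpn dvd_rfl ?_
  rw [natDegree_cyclotomic, ← hn, ← orderOf_units, ZMod.coe_unitOfCoprime]

theorem nonempty_algEquiv_pi_of_dvd_natCard_sub_one {n : ℕ} [NeZero n]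
    (hn : n ∣ Nat.card F - 1) :
    Nonempty (MonoidAlgebra F (Multiplicative (ZMod n)) ≃ₐ[F] (Fin n → F)) :=
  let ⟨_, hζ⟩ := exists_isPrimitiveRoot_of_dvd_natCard_sub_one hn
  nonempty_algEquiv_pi_of_isPrimitiveRoot hζ

theorem exists_field_nonempty_algEquiv_prod_of_orderOf_natCard {ℓ : ℕ} [hℓ : Fact ℓ.Prime]
    (hF : orderOf (Nat.card F : ZMod ℓ) = ℓ - 1) :
    ∃ (K : Type v) (_ : Field K) (_ : Algebra F K), Module.finrank F K = ℓ - 1 ∧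
      Nonempty (MonoidAlgebra F (Multiplicative (ZMod ℓ)) ≃ₐ[F] (F × K)) := by
  rw [← Nat.totient_prime hℓ.out] at hF ⊢
  have : Fact (Irreducible (cyclotomic ℓ F)) := ⟨irreducible_cyclotomic_of_orderOf_natCard hF⟩
  have := (cyclotomic.monic ℓ F).finite_adjoinRoot
  have : Finite (AdjoinRoot (cyclotomic ℓ F)) := Module.finite_of_finite F
  let e := Shrink.algEquiv.{v} F (AdjoinRoot (cyclotomic ℓ F))
  refine ⟨Shrink.{v} (AdjoinRoot (cyclotomic ℓ F)), inferInstance, inferInstance, ?_, ?_⟩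
  · rw [e.toLinearEquiv.finrank_eq]
    exact finrank_quotient_span_eq_natDegree.trans (natDegree_cyclotomic ℓ F)
  · have isUnit_ℓ : IsUnit (ℓ : F) :=
      isUnit_natCast_of_coprime_natCard (coprime_of_orderOf_natCast_pos (by
        rw [hF]; exact Nat.totient_pos.2 hℓ.out.pos))
    obtain ⟨e'⟩ := nonempty_algEquiv_prod_adjoinRoot_cyclotomic isUnit_ℓ
    exact ⟨e'.trans (AlgEquiv.prodCongr .refl e.symm)⟩

end Field

end

theorem monoidAlgebra_cyclic_three_char_two_general
    {ℓ p : ℕ} [Fact ℓ.Prime] [Fact p.Prime] (hp : orderOf (p : ZMod ℓ) = ℓ - 1)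
    (F : Type*) [Field F] [Finite F] [CharP F p] (t : ℕ)
    (ht : letI := ZMod.algebra F p; Module.finrank (ZMod p) F = t) :
    (ℓ - 1 ∣ t → Nonempty (MonoidAlgebra F (Multiplicative (ZMod ℓ)) ≃ₐ[F] (Fin ℓ → F))) ∧
    (t.Coprime (ℓ - 1) → ∃ (K : Type*) (_ : Field K) (_ : Algebra F K),
      Module.finrank F K = ℓ - 1 ∧
      Nonempty (MonoidAlgebra F (Multiplicative (ZMod ℓ)) ≃ₐ[F] (F × K))) := by
  let := ZMod.algebra F p
  have natCard_eq : Nat.card F = p ^ t := by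
    rw [Module.natCard_eq_pow_finrank (K := ZMod p), Nat.card_zmod, ht]
  rw [← hp]
  refine ⟨fun dvd_t ↦ nonempty_algEquiv_pi_of_dvd_natCard_sub_one ?_, fun coprime_t ↦ ?_⟩
  · rw [← Nat.modEq_iff_dvd' Nat.card_pos, ← ZMod.natCast_eq_natCast_iff, natCard_eq, Nat.cast_pow,
      orderOf_dvd_iff_pow_eq_one.1 dvd_t, Nat.cast_one]
  · rw [hp]
    apply exists_field_nonempty_algEquiv_prod_of_orderOf_natCard
    rw [natCard_eq, Nat.cast_pow, coprime_t.symm.orderOf_pow, hp]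

/-- Let `F` be a finite field of characteristic `2` with `[F : 𝔽₂] = t`. If `t` is even,
then `F[C₃] ≅ F³` as `F`-algebras; if `t` is odd, then `F[C₃] ≅ F × K` as `F`-algebras,
where `K` is a field extension of `F` of degree `2`. -/
theorem monoidAlgebra_cyclic_three_char_two
    (F : Type*) [Field F] [Finite F] [CharP F 2] (t : ℕ)
    (ht : letI := ZMod.algebra F 2; Module.finrank (ZMod 2) F = t) :
    (Even t → Nonempty (MonoidAlgebra F (Multiplicative (ZMod 3)) ≃ₐ[F] (Fin 3 → F))) ∧
    (Odd t → ∃ (K : Type*) (_ : Field K) (_ : Algebra F K),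
      Module.finrank F K = 2 ∧
      Nonempty (MonoidAlgebra F (Multiplicative (ZMod 3)) ≃ₐ[F] (F × K))) := by
  have orderOf_two : orderOf (2 : ZMod 3) = 2 := orderOf_eq_prime (by decide) (by decide)
  rw [even_iff_two_dvd, ← Nat.coprime_two_right]
  exact monoidAlgebra_cyclic_three_char_two_general (ℓ := 3) (p := 2) orderOf_two F t ht
end
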